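/- arXiv:1606.09445 — 2 statements merged into one kernel-verified Lean document; each statement's English description precedes it below -/
import Mathlib

section
/- Let x ∈ L_+ with x ∉ [0,c] (i.e., it is not the case that both x ∈ L_+ and c − x ∈ L_+), with normal form x = a_1 e_1 + ⋯ + a_n e_n + a c, and assume gcd(p_i, a_i) = 1 for all 1 ≤ i ≤ n (so in particular 1 ≤ a_i ≤ p_i − 1). Set R := S^x. Then for every j ∈ {1,…,n} and every integer u with 0 ≤ u ≤ p_j, the R-module S(u e_j)^x satisfies Ext^1_R(S(u e_j)^x, R) = 0 if and only if u ∈ I(p_j, p_j − a_j). -/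
set_option synthInstance.maxHeartbeats 1000000
set_option maxHeartbeats 1000000
noncomputable section

open MvPolynomial

def LRel (ι : Type) [DecidableEq ι] (p : ι → ℕ) : AddSubgroup (Option ι → ℤ) :=
  AddSubgroup.closure
    { v | ∃ i : ι, v = (p i : ℤ) • Pi.single (some i) 1 - Pi.single (none : Option ι) 1 }

abbrev LGroup (ι : Type) [DecidableEq ι] (p : ι → ℕ) : Type :=
  (Option ι → ℤ) ⧸ LRel ι p

def egen {ι : Type} [DecidableEq ι] (p : ι → ℕ) (i : ι) : LGroup ι p :=
  QuotientAddGroup.mk (Pi.single (some i) 1)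

def cgen {ι : Type} [DecidableEq ι] (p : ι → ℕ) : LGroup ι p :=
  QuotientAddGroup.mk (Pi.single (none : Option ι) 1)

def Lplus {ι : Type} [DecidableEq ι] (p : ι → ℕ) : AddSubmonoid (LGroup ι p) :=
  AddSubmonoid.closure (Set.range (egen p))

abbrev SPoly (ι : Type) : Type := MvPolynomial (ι ⊕ Fin 2) ℂ

def SIdl (ι : Type) (p : ι → ℕ) (c0 c1 : ι → ℂ) : Ideal (SPoly ι) :=
  Ideal.span { f | ∃ i : ι,
    f = X (Sum.inl i) ^ (p i) - (C (c0 i) * X (Sum.inr 0) + C (c1 i) * X (Sum.inr 1)) }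

abbrev SAlg (ι : Type) (p : ι → ℕ) (c0 c1 : ι → ℂ) : Type := SPoly ι ⧸ SIdl ι p c0 c1

def wtA {ι : Type} [Fintype ι] [DecidableEq ι] (p : ι → ℕ) (m : (ι ⊕ Fin 2) →₀ ℕ) :
    LGroup ι p :=
  (∑ i : ι, m (Sum.inl i) • egen p i) + (m (Sum.inr 0) + m (Sum.inr 1)) • cgen p

def polyCompA {ι : Type} [Fintype ι] [DecidableEq ι] (p : ι → ℕ) (y : LGroup ι p) :
    Submodule ℂ (SPoly ι) where
  carrier := { f | ∀ m, coeff m f ≠ 0 → wtA p m = y }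
  add_mem' := by
    intro f g hf hg m hm
    by_cases h : coeff m f = 0
    · refine hg m fun h' => hm ?_
      simp [coeff_add, h, h']
    · exact hf m h
  zero_mem' := by
    intro m hm
    simp at hm
  smul_mem' := by
    intro c f hf m hm
    refine hf m fun h => hm ?_
    simp [coeff_smul, h]

def SCompA {ι : Type} [Fintype ι] [DecidableEq ι] (p : ι → ℕ) (c0 c1 : ι → ℂ)
    (y : LGroup ι p) : Submodule ℂ (SAlg ι p c0 c1) :=
  (polyCompA p y).map (Ideal.Quotient.mkₐ ℂ (SIdl ι p c0 c1)).toLinearMap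

def SVerA {ι : Type} [Fintype ι] [DecidableEq ι] (p : ι → ℕ) (c0 c1 : ι → ℂ)
    (x : LGroup ι p) : Submodule ℂ (SAlg ι p c0 c1) :=
  ⨆ k : ℤ, SCompA p c0 c1 (k • x)

def SShiftA {ι : Type} [Fintype ι] [DecidableEq ι] (p : ι → ℕ) (c0 c1 : ι → ℂ)
    (y x : LGroup ι p) : Submodule ℂ (SAlg ι p c0 c1) :=
  ⨆ k : ℤ, SCompA p c0 c1 (y + k • x)

/-- The `i`-series of the Hirzebruch–Jung continued fraction expansion of `r/a`:
`i₀ = r`, `i₁ = a`, and `i_{t+1}` is the unique integer with `0 ≤ i_{t+1} < i_t` and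
`i_{t+1} ≡ −i_{t−1} (mod i_t)` (after the sequence reaches `0` it stays `0`). -/
def iSeq (r a : ℕ) : ℕ → ℕ
  | 0 => r
  | 1 => a
  | (t + 2) =>
      if iSeq r a (t + 1) = 0 then 0
      else (((-(iSeq r a t : ℤ)) % (iSeq r a (t + 1) : ℤ)).toNat)

/-- `I(r,a)`: the set of all terms of the `i`-series of `r/a`. -/
def ISet (r a : ℕ) : Set ℕ := Set.range (iSeq r a)

/-!
The generator `t = x_j` is a local parameter of `S` at the point `λ_j`: every homogeneous element of
`S` that vanishes there is divisible by `t`. The homogeneous elements that do not vanish there have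
degrees `l x + v e_j` behaving as for the cyclic quotient singularity `1/p (1, q)`, where `p = p_j`
and `q = p_j - a_j`; in particular `v ≡ l q` modulo `p`.

A positive multiple of `x` is a multiple `n e_j` of `e_j`. This gives a regular pair `f = t ^ n` and
`g`, of the same degree and with `g` nonvanishing at `λ_j`, in which both elements factor as an
element of `M = S(u e_j)^x` times a multiplier of `M` into `R`. Hence, by comparison with a
projective presentation of `M`, `Ext¹_R(M, R) = 0` if and only if every `h ∈ S(-u e_j)^x` with
`h M ⊆ (f, g)` lies in `(f, g)`.

Dividing a homogeneous `h` by `t` again and again modulo `g` either reaches `t ^ n` or stops at an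
element nonvanishing at `λ_j` that cannot be cancelled by a multiple of `g`. Whether the latter
happens for some `h` with `h M ⊆ (f, g)` depends only on the gaps between the integers `k q - s p`.
For `u < q` this arithmetic condition is preserved by the Euclidean step `(p, q) ↦ (q, -p mod q)`,
and for `u ≥ q` it fails exactly at `u = q` and `u = p`, so it fails exactly for `u ∈ I(p, q)`.
-/

/-! ### The `i`-series -/

section ISeries

/-- `u` is *obstructed* for `(p, q)` if, for some `k ≥ 1` and some lift `k * q - s * p` of the
residue of `k * q` modulo `p` lying in `[0, u)`, no positive integer `t * p - m * q` with
`1 ≤ m ≤ k` fits into the remaining gap `u - (k * q - s * p)`. This is the arithmetic condition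
on exponents of the local parameter under which an extension fails to split. -/
def IsObstructed (p q u : ℤ) : Prop :=
  ∃ k s : ℤ, 1 ≤ k ∧ 0 ≤ k * q - s * p ∧ k * q - s * p < u ∧
    ∀ m t : ℤ, 1 ≤ m → m ≤ k → 0 < t * p - m * q → u < (k * q - s * p) + (t * p - m * q)

lemma not_isObstructed_left (p q : ℤ) : ¬ IsObstructed p q p := by
  rintro ⟨k, s, hk, -, hu, hgap⟩
  have := hgap k (s + 1) hk le_rfl (by linarith)
  linarith

lemma not_isObstructed_right {p q : ℤ} (hqp : q < p) : ¬ IsObstructed p q q := by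
  rintro ⟨k, s, hk, h0, hu, hgap⟩
  rcases eq_or_lt_of_le hk with rfl | hk
  · have hs : 1 ≤ s := by by_contra! hs; nlinarith
    nlinarith
  · have := hgap (k - 1) s (by omega) (by omega) (by linarith)
    linarith

lemma isObstructed_of_lt_of_lt {p q u : ℤ} (hq : 0 ≤ q) (hqu : q < u) (hup : u < p) :
    IsObstructed p q u := by
  refine ⟨1, 0, le_rfl, by linarith, by linarith, fun m t hm1 hmk hpos => ?_⟩
  obtain rfl : m = 1 := le_antisymm hmk hm1
  have ht : 1 ≤ t := by by_contra! ht; nlinarith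
  nlinarith

/- The substitution `(k, s) = (b * k' - s', k')` satisfies `k * q - s * p = k' * q' - s' * q`, and
`(m, t) = (b * m' - t', m')` does the same for the gaps. -/
lemma isObstructed_euclid {p q q' b u : ℤ} (hq : 0 < q) (hqp : q < p) (hp : p = b * q - q')
    (hu : u < q) : IsObstructed p q u ↔ IsObstructed q q' u := by
  have swap (k s : ℤ) : (b * k - s) * q - k * p = k * q' - s * q := by rw [hp]; ring
  constructor
  · rintro ⟨k, s, hk, h0, hku, hgap⟩
    have hs : 1 ≤ s := by by_contra! hs; nlinarith
    have hks : s * q' - (b * s - k) * q = k * q - s * p := by rw [hp]; ring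
    refine ⟨s, b * s - k, hs, hks ▸ h0, hks ▸ hku, fun m t hm1 hms hpos => ?_⟩
    have hmt : m * p - (b * m - t) * q = t * q - m * q' := by linarith [swap m t]
    have hpm : p ≤ m * p := by nlinarith
    have hmsp : m * p ≤ s * p := by nlinarith
    by_contra! hle
    have h1 : 1 ≤ b * m - t := by by_contra! h; nlinarith
    have h2 : b * m - t ≤ k := by by_contra! h; nlinarith
    have := hgap _ m h1 h2 (by linarith)
    linarith
  · rintro ⟨k, s, hk, h0, hku, hgap⟩
    have hpk : p ≤ k * p := by nlinarith
    have h1 : 1 ≤ b * k - s := by by_contra! h; nlinarith [swap k s]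
    refine ⟨b * k - s, k, h1, by rwa [swap], by rwa [swap], fun m t hm1 hmk hpos => ?_⟩
    by_contra! hle
    rw [swap] at hle
    have ht : 1 ≤ t := by by_contra! h; nlinarith
    have htk : t ≤ k := by by_contra! h; nlinarith [swap k s]
    have := hgap t (b * t - m) ht htk (by linarith [swap t m, swap t (b * t - m)])
    linarith [swap t (b * t - m)]

lemma iSeq_succ {p q : ℕ} (hq : q ≠ 0) (t : ℕ) :
    iSeq p q (t + 1) = iSeq q (-(p : ℤ) % q).toNat t := by
  induction t using Nat.twoStepInduction with
  | zero => simp only [iSeq]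
  | one => simp only [iSeq, hq, if_false]
  | more t ih₁ ih₂ =>
    rw [iSeq, ih₁, ih₂]
    conv_rhs => rw [iSeq]

lemma iSeq_zero_succ (p t : ℕ) : iSeq p 0 (t + 1) = 0 := by
  induction t with
  | zero => simp only [iSeq]
  | succ t ih => simp only [iSeq, ih, if_true]

lemma ISet_eq_insert {p q : ℕ} (hq : q ≠ 0) :
    ISet p q = insert p (ISet q (-(p : ℤ) % q).toNat) := by
  ext u
  refine ⟨?_, ?_⟩
  · rintro ⟨_ | t, rfl⟩
    · exact Or.inl rfl
    · exact Or.inr ⟨t, (iSeq_succ hq t).symm⟩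
  · rintro (rfl | ⟨t, rfl⟩)
    · exact ⟨0, rfl⟩
    · exact ⟨t + 1, iSeq_succ hq t⟩

lemma ISet_zero_right (p : ℕ) : ISet p 0 = {p, 0} := by
  ext u
  refine ⟨?_, ?_⟩
  · rintro ⟨_ | t, rfl⟩
    · exact Or.inl rfl
    · exact Or.inr (iSeq_zero_succ p t)
  · rintro (rfl | rfl)
    · exact ⟨0, rfl⟩
    · exact ⟨1, rfl⟩

lemma toNat_neg_emod_lt (p : ℤ) {q : ℕ} (hq : 0 < q) : (-p % q).toNat < q := by
  have := Int.emod_lt_of_pos (-p) (Int.natCast_pos.2 hq)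
  omega

lemma le_of_mem_ISet {p q u : ℕ} (hqp : q < p) (hu : u ∈ ISet p q) : u ≤ p := by
  induction q using Nat.strong_induction_on generalizing p with
  | _ q ih =>
    rcases Nat.eq_zero_or_pos q with rfl | hq
    · rw [ISet_zero_right] at hu
      rcases hu with rfl | rfl <;> omega
    · rw [ISet_eq_insert hq.ne'] at hu
      rcases hu with rfl | hu
      · exact le_rfl
      · have hlt := toNat_neg_emod_lt p hq
        exact (ih _ hlt hlt hu).trans hqp.le

theorem mem_ISet_iff_not_isObstructed {p q u : ℕ} (hqp : q < p) (hu : u ≤ p) :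
    u ∈ ISet p q ↔ ¬ IsObstructed p q u := by
  induction q using Nat.strong_induction_on generalizing p with
  | _ q ih =>
    rcases eq_or_lt_of_le hu with rfl | hup
    · exact iff_of_true ⟨0, rfl⟩ (not_isObstructed_left _ _)
    rcases lt_trichotomy u q with huq | rfl | hqu
    · have hq : 0 < q := by omega
      have hlt := toNat_neg_emod_lt p hq
      have hstep : (p : ℤ) = -(-(p : ℤ) / q) * q - (-(p : ℤ) % q).toNat := by
        rw [Int.toNat_of_nonneg (Int.emod_nonneg _ (by omega))]
        linarith [Int.emod_add_mul_ediv (-(p : ℤ)) q]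
      rw [ISet_eq_insert hq.ne', Set.mem_insert_iff, or_iff_right hup.ne, ih _ hlt hlt huq.le,
        isObstructed_euclid (by omega) (by omega) hstep (by omega)]
    · exact iff_of_true ⟨1, rfl⟩ (not_isObstructed_right (by omega))
    · refine iff_of_false (fun h => ?_)
        (not_not_intro (isObstructed_of_lt_of_lt (by omega) (by omega) (by omega)))
      rcases Nat.eq_zero_or_pos q with rfl | hq
      · rw [ISet_zero_right] at h
        rcases h with rfl | rfl <;> omega
      · rw [ISet_eq_insert hq.ne'] at h
        have := le_of_mem_ISet (toNat_neg_emod_lt p hq) (h.resolve_left hup.ne)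
        omega

end ISeries

/-! ### Vanishing of `Ext¹` in the presence of a regular pair -/

section ExtOne

universe u

open CategoryTheory

section LinearMap

variable {R P M N : Type*} [CommRing R] [AddCommGroup P] [AddCommGroup M] [AddCommGroup N]
  [Module R P] [Module R M] [Module R N]

lemma exists_comp_eq_of_ker_le {π : P →ₗ[R] M} (hπ : Function.Surjective π) {χ : P →ₗ[R] N}
    (h : LinearMap.ker π ≤ LinearMap.ker χ) : ∃ θ : M →ₗ[R] N, ∀ p, θ (π p) = χ p := by
  refine ⟨(LinearMap.ker π).liftQ χ h ∘ₗ (π.quotKerEquivOfSurjective hπ).symm, fun p => ?_⟩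
  have hp : (π.quotKerEquivOfSurjective hπ).symm (π p) = Submodule.Quotient.mk p := by
    rw [LinearEquiv.symm_apply_eq, LinearMap.quotKerEquivOfSurjective_apply_mk]
  rw [LinearMap.comp_apply, LinearEquiv.coe_coe, hp, Submodule.liftQ_apply]

lemma exists_eq_smul_of_forall_exists {f : R} (hf : IsSMulRegular N f) {χ : P →ₗ[R] N}
    (h : ∀ p, ∃ n, χ p = f • n) : ∃ ψ : P →ₗ[R] N, ∀ p, χ p = f • ψ p := by
  choose ψ hψ using h
  refine ⟨⟨⟨ψ, fun p p' => hf ?_⟩, fun r p => hf ?_⟩, hψ⟩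
  · simp only [smul_add, ← hψ, map_add]
  · simp only [RingHom.id_apply, ← hψ, map_smul, smul_comm f r]

variable {π : P →ₗ[R] M} {f g : R}

lemma exists_extend_smul (hπ : Function.Surjective π)
    (hfM : ∃ (a : M) (b : M →ₗ[R] R), ∀ m, b m • a = f • m) (φ : LinearMap.ker π →ₗ[R] N) :
    ∃ χ : P →ₗ[R] N, ∀ k : LinearMap.ker π, χ k = f • φ k := by
  obtain ⟨a, b, hab⟩ := hfM
  obtain ⟨a, rfl⟩ := hπ a
  let F : P →ₗ[R] P := f • LinearMap.id - (b ∘ₗ π).smulRight a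
  have hF (p) : F p ∈ LinearMap.ker π := by simp [F, hab]
  refine ⟨φ ∘ₗ F.codRestrict _ hF, fun k => ?_⟩
  rw [← map_smul]
  exact congrArg φ (Subtype.ext (by simp [F]))

lemma exists_extend_of_regular (hπ : Function.Surjective π) (hf : IsSMulRegular N f)
    (hfg : ∀ n n' : N, f • n = g • n' → ∃ n'', n' = f • n'')
    (hfM : ∃ (a : M) (b : M →ₗ[R] R), ∀ m, b m • a = f • m)
    (hgM : ∃ (a : M) (b : M →ₗ[R] R), ∀ m, b m • a = g • m)
    (hsplit : ∀ θ : M →ₗ[R] N, (∀ m, ∃ n n', θ m = f • n + g • n') →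
      ∃ A B : M →ₗ[R] N, ∀ m, θ m = f • A m + g • B m) (φ : LinearMap.ker π →ₗ[R] N) :
    ∃ ψ : P →ₗ[R] N, ∀ k : LinearMap.ker π, ψ k = φ k := by
  obtain ⟨χf, hχf⟩ := exists_extend_smul hπ hfM φ
  obtain ⟨χg, hχg⟩ := exists_extend_smul hπ hgM φ
  obtain ⟨θ, hθ⟩ := exists_comp_eq_of_ker_le hπ (χ := g • χf - f • χg) fun k hk => by
    have hk₁ := hχf ⟨k, hk⟩
    have hk₂ := hχg ⟨k, hk⟩
    simp only [LinearMap.mem_ker, LinearMap.sub_apply, LinearMap.smul_apply, hk₁, hk₂,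
      smul_comm f g, sub_self]
  simp only [LinearMap.sub_apply, LinearMap.smul_apply] at hθ
  obtain ⟨A, B, hAB⟩ := hsplit θ fun m => by
    obtain ⟨p, rfl⟩ := hπ m
    exact ⟨-χg p, χf p, by rw [hθ]; module⟩
  obtain ⟨ψ, hψ⟩ := exists_eq_smul_of_forall_exists hf (χ := χf - B ∘ₗ π) fun p => by
    refine hfg (χg p + A (π p)) _ ?_
    have := (hθ p).symm.trans (hAB (π p))
    simp only [LinearMap.sub_apply, LinearMap.comp_apply]
    linear_combination (norm := module) -this
  refine ⟨ψ, fun k => hf ?_⟩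
  have := hψ k
  simp_all

lemma exists_split_of_regular [Module.Projective R P] (hπ : Function.Surjective π)
    (hf : IsSMulRegular N f) (hfg : ∀ n n' : N, f • n = g • n' → ∃ n'', n' = f • n'')
    (hext : ∀ φ : LinearMap.ker π →ₗ[R] N, ∃ ψ : P →ₗ[R] N, ∀ k : LinearMap.ker π, ψ k = φ k)
    (θ : M →ₗ[R] N) (hθ : ∀ m, ∃ n n', θ m = f • n + g • n') :
    ∃ A B : M →ₗ[R] N, ∀ m, θ m = f • A m + g • B m := by
  let μ : N × N →ₗ[R] N := LinearMap.coprod (f • LinearMap.id) (g • LinearMap.id)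
  have hμ (m) : θ m ∈ LinearMap.range μ := by
    obtain ⟨n, n', h⟩ := hθ m
    exact ⟨(n, n'), by simp [μ, h]⟩
  obtain ⟨ν, hν⟩ := Module.projective_lifting_property μ.rangeRestrict
    (θ.codRestrict _ hμ ∘ₗ π) μ.surjective_rangeRestrict
  have hν (p) : f • (ν p).1 + g • (ν p).2 = θ (π p) := congr((($hν) p : N))
  have hker (k : LinearMap.ker π) : f • (ν k).1 + g • (ν k).2 = 0 := by
    rw [hν, k.2, map_zero]
  obtain ⟨φ, hφ⟩ := exists_eq_smul_of_forall_exists hf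
    (χ := LinearMap.snd R N N ∘ₗ ν ∘ₗ (LinearMap.ker π).subtype) fun k =>
      hfg (-(ν k).1) _ (by simpa [neg_eq_iff_add_eq_zero] using hker k)
  obtain ⟨ψ, hψ⟩ := hext φ
  obtain ⟨B, hB⟩ := exists_comp_eq_of_ker_le hπ (χ := LinearMap.snd R N N ∘ₗ ν - f • ψ)
    fun k hk => by simpa [sub_eq_zero, hψ ⟨k, hk⟩] using hφ ⟨k, hk⟩
  obtain ⟨A, hA⟩ := exists_comp_eq_of_ker_le hπ (χ := LinearMap.fst R N N ∘ₗ ν + g • ψ)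
    fun k hk => hf (by
      have h₁ := hker ⟨k, hk⟩
      have h₂ : (ν k).2 = f • ψ k := (hφ ⟨k, hk⟩).trans congr(f • $((hψ ⟨k, hk⟩).symm))
      simp only at h₁
      simp only [LinearMap.add_apply, LinearMap.comp_apply, LinearMap.fst_apply,
        LinearMap.smul_apply, smul_add, smul_zero, smul_comm f g, ← h₂, h₁])
  refine ⟨A, B, fun m => ?_⟩
  obtain ⟨p, rfl⟩ := hπ m
  simp only [hA, hB, ← hν, LinearMap.add_apply, LinearMap.sub_apply, LinearMap.comp_apply,
    LinearMap.fst_apply, LinearMap.snd_apply, LinearMap.smul_apply]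
  module

end LinearMap

variable {R : Type u} [CommRing R] {M N : Type u} [AddCommGroup M] [AddCommGroup N]
  [Module R M] [Module R N]

lemma subsingleton_ext_one_iff_of_projectiveResolution {X Y : ModuleCat.{u} R}
    (P : ProjectiveResolution X) :
    Subsingleton (((Ext R (ModuleCat R) 1).obj (Opposite.op X)).obj Y) ↔
      ∀ φ : P.complex.X 1 ⟶ Y, P.complex.d 2 1 ≫ φ = 0 →
        ∃ ψ : P.complex.X 0 ⟶ Y, P.complex.d 1 0 ≫ ψ = φ := by
  rw [← ModuleCat.isZero_iff_subsingleton, (P.isoExt 1 Y).isZero_iff,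
    ← HomologicalComplex.exactAt_iff_isZero_homology,
    HomologicalComplex.exactAt_iff' _ 0 1 2 (by simp) (by simp),
    ShortComplex.moduleCat_exact_iff]
  rfl

variable (R M) in
lemma exists_projective_subsingleton_ext_one_iff :
    ∃ (P : ModuleCat.{u} R) (π : P →ₗ[R] M), Module.Projective R P ∧ Function.Surjective π ∧
      ∀ (N : Type u) [AddCommGroup N] [Module R N],
        Subsingleton (((Ext R (ModuleCat R) 1).obj (Opposite.op (ModuleCat.of R M))).obj
          (ModuleCat.of R N)) ↔
        ∀ φ : LinearMap.ker π →ₗ[R] N, ∃ ψ : P →ₗ[R] N, ∀ k : LinearMap.ker π, ψ k = φ k := by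
  let Q := ProjectiveResolution.of (ModuleCat.of R M)
  let π : Q.complex.X 0 →ₗ[R] M := (Q.π.f 0).hom
  let d₁ : Q.complex.X 1 →ₗ[R] Q.complex.X 0 := (Q.complex.d 1 0).hom
  let d₂ : Q.complex.X 2 →ₗ[R] Q.complex.X 1 := (Q.complex.d 2 1).hom
  have hd₁ (x) : π (d₁ x) = 0 := congr(($Q.complex_d_comp_π_f_zero).hom x)
  have hd₂ (x) : d₁ (d₂ x) = 0 := congr(($(Q.complex.d_comp_d 2 1 0)).hom x)
  have exact₀ (x) (hx : π x = 0) : ∃ y, d₁ y = x :=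
    (ShortComplex.moduleCat_exact_iff _).1 Q.exact₀ x hx
  have exact₁ (x) (hx : d₁ x = 0) : ∃ y, d₂ y = x :=
    (ShortComplex.moduleCat_exact_iff _).1 (Q.exact_succ 0) x hx
  let d : Q.complex.X 1 →ₗ[R] LinearMap.ker π := d₁.codRestrict _ hd₁
  have hd : Function.Surjective d := fun ⟨x, hx⟩ => (exact₀ x hx).imp fun y hy => Subtype.ext hy
  refine ⟨Q.complex.X 0, π, (IsProjective.iff_projective _).2 (Q.projective 0),
    (ModuleCat.epi_iff_surjective _).1 inferInstance, fun N _ _ => ?_⟩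
  rw [subsingleton_ext_one_iff_of_projectiveResolution Q]
  constructor
  · intro h φ
    obtain ⟨ψ, hψ⟩ := h (ModuleCat.ofHom (φ ∘ₗ d)) (by
      ext x
      exact (congrArg φ (Subtype.ext (hd₂ x))).trans (map_zero φ))
    refine ⟨ψ.hom, fun k => ?_⟩
    obtain ⟨y, rfl⟩ := hd k
    exact congr(($hψ).hom y)
  · intro h φ hφ
    obtain ⟨φ', hφ'⟩ := exists_comp_eq_of_ker_le hd (χ := φ.hom) (fun x hx => by
      obtain ⟨y, rfl⟩ := exact₁ x congr(($hx : Q.complex.X 0))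
      exact congr(($hφ).hom y))
    obtain ⟨ψ, hψ⟩ := h φ'
    refine ⟨ModuleCat.ofHom ψ, ?_⟩
    ext x
    exact (hψ (d x)).trans (hφ' x)

/- For a projective `π : P → M`, multiplication by `f` and by `g` on `M` lifts to `M → P`, so a map
`φ : ker π → N` extends to `P` after multiplication by `f` or by `g`; the two extensions differ by
a map `M → N` with values in `f N + g N`, and can be divided if and only if it splits as
`f A + g B`. Conversely such a map produces, by projectivity of `P`, a map on `ker π`. -/
theorem subsingleton_ext_one_iff_of_regular {f g : R} (hf : IsSMulRegular N f)
    (hfg : ∀ n n' : N, f • n = g • n' → ∃ n'', n' = f • n'')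
    (hfM : ∃ (a : M) (b : M →ₗ[R] R), ∀ m, b m • a = f • m)
    (hgM : ∃ (a : M) (b : M →ₗ[R] R), ∀ m, b m • a = g • m) :
    Subsingleton (((Ext R (ModuleCat R) 1).obj (Opposite.op (ModuleCat.of R M))).obj
      (ModuleCat.of R N)) ↔
    ∀ θ : M →ₗ[R] N, (∀ m, ∃ n n', θ m = f • n + g • n') →
      ∃ A B : M →ₗ[R] N, ∀ m, θ m = f • A m + g • B m := by
  obtain ⟨P, π, hP, hπ, hExt⟩ := exists_projective_subsingleton_ext_one_iff R M
  rw [hExt]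
  exact ⟨exists_split_of_regular hπ hf hfg, exists_extend_of_regular hπ hf hfg hfM hgM⟩

end ExtOne

section Subalgebra

universe u

open CategoryTheory

variable {k : Type*} {S : Type u} [CommRing k] [CommRing S] [Algebra k S] {R : Subalgebra k S}
  {M : Submodule R S}

lemma exists_eq_mul_of_linearMap {a₁ b₁ a₂ b₂ : S} (ha₁ : a₁ ∈ M) (ha₂ : a₂ ∈ M)
    (hb₁ : ∀ m ∈ M, b₁ * m ∈ R) (hreg : a₁ * b₁ ∈ nonZeroDivisors S)
    (hdvd : ∀ s s', a₁ * b₁ * s = a₂ * b₂ * s' → a₁ * b₁ ∣ s') (θ : M →ₗ[R] R) :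
    ∃ h : S, ∀ m : M, (θ m : S) = h * m := by
  have eval (m : M) : a₁ * b₁ * θ m = b₁ * θ ⟨a₁, ha₁⟩ * m := by
    let r : R := ⟨b₁ * a₁, hb₁ a₁ ha₁⟩
    let r' : R := ⟨b₁ * m, hb₁ m m.2⟩
    have hrm : r • m = r' • (⟨a₁, ha₁⟩ : M) := Subtype.ext (by
      change b₁ * a₁ * m = b₁ * m * a₁
      ring)
    have := congr(($(congrArg θ hrm) : S))
    simp only [map_smul, smul_eq_mul, MulMemClass.coe_mul, r, r'] at this
    linear_combination this
  obtain ⟨h, hh⟩ := hdvd (b₂ * θ ⟨a₂, ha₂⟩) (b₁ * θ ⟨a₁, ha₁⟩) (by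
    linear_combination b₂ * eval ⟨a₂, ha₂⟩)
  refine ⟨h, fun m => mul_cancel_left_mem_nonZeroDivisors hreg |>.1 ?_⟩
  rw [eval, hh, mul_assoc]

/-- Multiplication by an element of `S` that carries `M` into `R`. -/
def mulInto (h : S) (hM : ∀ m ∈ M, h * m ∈ R) : M →ₗ[R] R where
  toFun m := ⟨h * m, hM m m.2⟩
  map_add' m m' := Subtype.ext (mul_add h m m')
  map_smul' r m := Subtype.ext (mul_smul_comm r h (m : S))

theorem subsingleton_ext_one_iff_forall_mul {a₁ b₁ a₂ b₂ : S} (ha₁ : a₁ ∈ M) (ha₂ : a₂ ∈ M)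
    (hb₁ : ∀ m ∈ M, b₁ * m ∈ R) (hb₂ : ∀ m ∈ M, b₂ * m ∈ R)
    (hreg : a₁ * b₁ ∈ nonZeroDivisors S)
    (hdvd : ∀ s s', a₁ * b₁ * s = a₂ * b₂ * s' → a₁ * b₁ ∣ s')
    (hsat : ∀ s, a₁ * b₁ * s ∈ R → s ∈ R) :
    Subsingleton (((Ext R (ModuleCat R) 1).obj (Opposite.op (ModuleCat.of R M))).obj
      (ModuleCat.of R R)) ↔
    ∀ h, (∀ m ∈ M, h * m ∈ R) →
      (∀ m ∈ M, ∃ r ∈ R, ∃ r' ∈ R, h * m = a₁ * b₁ * r + a₂ * b₂ * r') →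
      ∃ A B, (∀ m ∈ M, A * m ∈ R) ∧ (∀ m ∈ M, B * m ∈ R) ∧
        h = a₁ * b₁ * A + a₂ * b₂ * B := by
  let f : R := ⟨a₁ * b₁, mul_comm b₁ a₁ ▸ hb₁ a₁ ha₁⟩
  let g : R := ⟨a₂ * b₂, mul_comm b₂ a₂ ▸ hb₂ a₂ ha₂⟩
  have hf : IsSMulRegular R f := fun r r' h =>
    Subtype.ext ((mul_cancel_left_mem_nonZeroDivisors hreg).1 congr(($h : S)))
  have hfg (n n' : R) (h : f • n = g • n') : ∃ n'', n' = f • n'' := by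
    obtain ⟨s, hs⟩ := hdvd n n' congr(($h : S))
    exact ⟨⟨s, hsat s (hs ▸ n'.2)⟩, Subtype.ext hs⟩
  have hfM : ∃ (a : M) (b : M →ₗ[R] R), ∀ m, b m • a = f • m :=
    ⟨⟨a₁, ha₁⟩, mulInto b₁ hb₁, fun m => Subtype.ext (by
      change b₁ * m * a₁ = a₁ * b₁ * m
      ring)⟩
  have hgM : ∃ (a : M) (b : M →ₗ[R] R), ∀ m, b m • a = g • m :=
    ⟨⟨a₂, ha₂⟩, mulInto b₂ hb₂, fun m => Subtype.ext (by
      change b₂ * m * a₂ = a₂ * b₂ * m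
      ring)⟩
  have hmul := exists_eq_mul_of_linearMap ha₁ ha₂ hb₁ hreg hdvd
  rw [subsingleton_ext_one_iff_of_regular hf hfg hfM hgM]
  constructor
  · intro H h hM hJ
    obtain ⟨A, B, hAB⟩ := H (mulInto h hM) fun m => by
      obtain ⟨r, hr, r', hr', e⟩ := hJ m m.2
      exact ⟨⟨r, hr⟩, ⟨r', hr'⟩, Subtype.ext e⟩
    obtain ⟨a, ha⟩ := hmul A
    obtain ⟨b, hb⟩ := hmul B
    refine ⟨a, b, fun m hm => ha ⟨m, hm⟩ ▸ (A _).2, fun m hm => hb ⟨m, hm⟩ ▸ (B _).2, ?_⟩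
    have e : h * a₁ = a₁ * b₁ * A ⟨a₁, ha₁⟩ + a₂ * b₂ * B ⟨a₁, ha₁⟩ :=
      congr(($(hAB ⟨a₁, ha₁⟩) : S))
    rw [ha, hb] at e
    exact (mul_cancel_left_mem_nonZeroDivisors hreg).1 (by linear_combination b₁ * e)
  · intro H θ hθ
    obtain ⟨h, hh⟩ := hmul θ
    obtain ⟨A, B, hA, hB, e⟩ := H h (fun m hm => hh ⟨m, hm⟩ ▸ (θ _).2) fun m hm => by
      obtain ⟨r, r', e⟩ := hθ ⟨m, hm⟩
      exact ⟨r, r.2, r', r'.2, by rw [← hh ⟨m, hm⟩, e]; rfl⟩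
    refine ⟨mulInto A hA, mulInto B hB, fun m => Subtype.ext ?_⟩
    change (θ m : S) = a₁ * b₁ * (A * m) + a₂ * b₂ * (B * m)
    rw [hh, e]
    ring

end Subalgebra

/-! ### Algebras graded by an abelian group -/

section Graded

open DirectSum

variable {L k S : Type*} [AddCommGroup L] [CommRing k] [CommRing S] [Algebra k S]
  (𝒜 : L → Submodule k S)

/-- The sum `⨁ 𝒜 z` over the coset `z ∈ y + ℤ x`: the Veronese subring for `y = 0`, and a module
over it in general. -/
def cosetPart (y x : L) : Submodule k S := ⨆ i : ℤ, 𝒜 (y + i • x)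

variable {𝒜}

lemma mem_cosetPart_of_mem {x y z : L} {s : S} (hs : s ∈ 𝒜 z)
    (hz : z - y ∈ AddSubgroup.zmultiples x) : s ∈ cosetPart 𝒜 y x := by
  obtain ⟨i, hi⟩ := AddSubgroup.mem_zmultiples_iff.1 hz
  exact Submodule.mem_iSup_of_mem i (by rwa [hi, add_sub_cancel])

variable [DecidableEq L] [GradedAlgebra 𝒜]

lemma coe_decompose_mul_of_left_mem_sub {i : L} {a : S} (ha : a ∈ 𝒜 i) (s : S) (z : L) :
    (decompose 𝒜 (a * s) z : S) = a * decompose 𝒜 s (z - i) := by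
  rw [← coe_decompose_mul_add_of_left_mem 𝒜 ha, add_sub_cancel]

lemma exists_mem_eq_mul_of_dvd {i z : L} {a s : S} (ha : a ∈ 𝒜 i) (hs : s ∈ 𝒜 z) (h : a ∣ s) :
    ∃ b ∈ 𝒜 (z - i), s = a * b := by
  obtain ⟨b, rfl⟩ := h
  refine ⟨decompose 𝒜 b (z - i), SetLike.coe_mem _, ?_⟩
  rw [← coe_decompose_mul_of_left_mem_sub ha, decompose_of_mem_same 𝒜 hs]

lemma exists_mem_eq_of_mem_span_pair {i j z : L} {f g s : S} (hf : f ∈ 𝒜 i) (hg : g ∈ 𝒜 j)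
    (hs : s ∈ 𝒜 z) (h : s ∈ Ideal.span {f, g}) :
    ∃ a ∈ 𝒜 (z - i), ∃ b ∈ 𝒜 (z - j), s = f * a + g * b := by
  obtain ⟨a, b, rfl⟩ := Ideal.mem_span_pair.1 h
  refine ⟨decompose 𝒜 a (z - i), SetLike.coe_mem _, decompose 𝒜 b (z - j), SetLike.coe_mem _, ?_⟩
  rw [← coe_decompose_mul_of_left_mem_sub hf, ← coe_decompose_mul_of_left_mem_sub hg,
    ← Submodule.coe_add, ← DirectSum.add_apply, ← decompose_add, mul_comm f, mul_comm g,
    decompose_of_mem_same 𝒜 hs]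

variable (𝒜) in
lemma dvd_of_forall_dvd_decompose {a s : S} (h : ∀ z, a ∣ decompose 𝒜 s z) : a ∣ s := by
  classical
  rw [← sum_support_decompose 𝒜 s]
  exact Finset.dvd_sum fun z _ => h z

lemma mem_nonZeroDivisors_of_mem {i : L} {a : S} (ha : a ∈ 𝒜 i)
    (h : ∀ z, ∀ s ∈ 𝒜 z, a * s = 0 → s = 0) : a ∈ nonZeroDivisors S := by
  refine mem_nonZeroDivisors_iff_right.2 fun s hs => (decompose 𝒜).injective ?_
  rw [decompose_zero]
  ext z
  refine h z _ (SetLike.coe_mem _) ?_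
  rw [← coe_decompose_mul_add_of_left_mem 𝒜 ha, mul_comm, hs, decompose_zero]
  rfl

lemma isHomogeneous_span_pair {i j : L} {f g : S} (hf : f ∈ 𝒜 i) (hg : g ∈ 𝒜 j) :
    (Ideal.span {f, g}).IsHomogeneous 𝒜 :=
  Ideal.homogeneous_span 𝒜 _ (by
    rintro _ (rfl | rfl)
    exacts [⟨i, hf⟩, ⟨j, hg⟩])

section Coset

variable {x y : L}

lemma mem_cosetPart_iff {s : S} :
    s ∈ cosetPart 𝒜 y x ↔
      ∀ z, (decompose 𝒜 s z : S) ≠ 0 → z - y ∈ AddSubgroup.zmultiples x := by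
  classical
  refine ⟨fun hs z hz => ?_, fun h => ?_⟩
  · by_contra hzy
    refine hz (Submodule.iSup_induction _ (motive := fun s => (decompose 𝒜 s z : S) = 0) hs
      (fun i s hs => decompose_of_mem_ne 𝒜 hs ?_) (by simp) fun s s' hs hs' => by simp [hs, hs'])
    rintro rfl
    exact hzy (by simp [AddSubgroup.mem_zmultiples_iff])
  · rw [← sum_support_decompose 𝒜 s]
    exact sum_mem fun z hz => mem_cosetPart_of_mem (SetLike.coe_mem _)
      (h z (by simpa using hz))

lemma mul_mem_cosetPart_of_mem {a s : S} {z y' : L} (ha : a ∈ 𝒜 z)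
    (hz : z + y - y' ∈ AddSubgroup.zmultiples x) (hs : s ∈ cosetPart 𝒜 y x) :
    a * s ∈ cosetPart 𝒜 y' x := by
  rw [mem_cosetPart_iff] at hs ⊢
  intro w hw
  rw [coe_decompose_mul_of_left_mem_sub ha] at hw
  convert add_mem (hs _ (right_ne_zero_of_mul hw)) hz using 1
  abel

lemma mul_mem_cosetPart {y' : L} {s s' : S} (hs : s ∈ cosetPart 𝒜 y x)
    (hs' : s' ∈ cosetPart 𝒜 y' x) : s * s' ∈ cosetPart 𝒜 (y + y') x := by
  refine Submodule.iSup_induction _ (motive := fun s => s * s' ∈ cosetPart 𝒜 (y + y') x) hs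
    (fun i s hs => mul_mem_cosetPart_of_mem hs ?_ hs') (by simp) fun s₁ s₂ h₁ h₂ => ?_
  · rw [add_sub_add_right_eq_sub, add_sub_cancel_left]
    exact AddSubgroup.zsmul_mem_zmultiples x i
  · rw [add_mul]
    exact add_mem h₁ h₂

lemma mem_cosetPart_of_mul_mem {a s : S} {z y' : L} (ha : a ∈ 𝒜 z) (hreg : a ∈ nonZeroDivisors S)
    (hz : z + y - y' ∈ AddSubgroup.zmultiples x) (hs : a * s ∈ cosetPart 𝒜 y' x) :
    s ∈ cosetPart 𝒜 y x := by
  rw [mem_cosetPart_iff] at hs ⊢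
  intro w hw
  have := hs (z + w) (by
    rw [coe_decompose_mul_add_of_left_mem 𝒜 ha]
    exact (mul_left_mem_nonZeroDivisors_eq_zero_iff hreg).not.2 hw)
  convert sub_mem this hz using 1
  abel

lemma exists_mem_cosetPart_of_mem_span_pair {f g s : S} {i j : L} (hf : f ∈ 𝒜 i) (hg : g ∈ 𝒜 j)
    (hi : i ∈ AddSubgroup.zmultiples x) (hj : j ∈ AddSubgroup.zmultiples x)
    (hs : s ∈ cosetPart 𝒜 y x) (h : s ∈ Ideal.span {f, g}) :
    ∃ a ∈ cosetPart 𝒜 y x, ∃ b ∈ cosetPart 𝒜 y x, s = f * a + g * b := by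
  classical
  let W : Submodule k S := (cosetPart 𝒜 y x).map (LinearMap.mulLeft k f) ⊔
    (cosetPart 𝒜 y x).map (LinearMap.mulLeft k g)
  suffices hW : s ∈ W by
    obtain ⟨_, ⟨a, ha, rfl⟩, _, ⟨b, hb, rfl⟩, rfl⟩ := Submodule.mem_sup.1 hW
    exact ⟨a, ha, b, hb, rfl⟩
  rw [← sum_support_decompose 𝒜 s]
  refine sum_mem fun z hz => ?_
  obtain ⟨a, ha, b, hb, e⟩ := exists_mem_eq_of_mem_span_pair hf hg (SetLike.coe_mem _)
    ((isHomogeneous_span_pair hf hg).mem_iff.1 h z)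
  have hzy := mem_cosetPart_iff.1 hs z (by simpa using hz)
  rw [e]
  refine add_mem (Submodule.mem_sup_left ⟨a, ?_, rfl⟩) (Submodule.mem_sup_right ⟨b, ?_, rfl⟩)
  · exact mem_cosetPart_of_mem ha (by rw [sub_right_comm]; exact sub_mem hzy hi)
  · exact mem_cosetPart_of_mem hb (by rw [sub_right_comm]; exact sub_mem hzy hj)

end Coset

end Graded

section GradedExtOne

universe u

open CategoryTheory DirectSum

variable {L k : Type*} {S : Type u} [AddCommGroup L] [DecidableEq L] [CommRing k] [CommRing S]
  [Algebra k S] {𝒜 : L → Submodule k S} [GradedAlgebra 𝒜] {x y : L}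

lemma mem_cosetPart_neg_iff {a : S} {i : L} (ha : a ∈ 𝒜 i) (hreg : a ∈ nonZeroDivisors S)
    (hi : i - y ∈ AddSubgroup.zmultiples x) {h : S} :
    h ∈ cosetPart 𝒜 (-y) x ↔ ∀ m ∈ cosetPart 𝒜 y x, h * m ∈ cosetPart 𝒜 0 x := by
  refine ⟨fun hh m hm => neg_add_cancel y ▸ mul_mem_cosetPart hh hm, fun hM => ?_⟩
  refine mem_cosetPart_of_mul_mem ha hreg (y' := 0) (by simpa [sub_eq_add_neg] using hi) ?_
  exact mul_comm h a ▸ hM a (mem_cosetPart_of_mem ha hi)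

lemma forall_mem_span_pair_iff_forall_homogeneous {f g : S} {i j : L} (hf : f ∈ 𝒜 i)
    (hg : g ∈ 𝒜 j) :
    (∀ h ∈ cosetPart 𝒜 (-y) x, (∀ m ∈ cosetPart 𝒜 y x, h * m ∈ Ideal.span {f, g}) →
        h ∈ Ideal.span {f, g}) ↔
      ∀ z h, z + y ∈ AddSubgroup.zmultiples x → h ∈ 𝒜 z →
        (∀ w m, w - y ∈ AddSubgroup.zmultiples x → m ∈ 𝒜 w → h * m ∈ Ideal.span {f, g}) →
        h ∈ Ideal.span {f, g} := by
  have hJ := isHomogeneous_span_pair hf hg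
  constructor
  · intro H z h hz hh hm
    refine H h (mem_cosetPart_of_mem hh (by rwa [sub_neg_eq_add])) fun m hmy => ?_
    refine Submodule.iSup_induction _ (motive := fun m => h * m ∈ Ideal.span {f, g}) hmy
      (fun i m => hm _ m (by simp [AddSubgroup.mem_zmultiples_iff])) (by simp) fun m m' h₁ h₂ => ?_
    rw [mul_add]
    exact add_mem h₁ h₂
  · intro H h hh hm
    refine hJ.mem_iff.2 fun z => ?_
    by_cases hz : (decompose 𝒜 h z : S) = 0
    · rw [hz]
      exact zero_mem _
    refine H z _ (by simpa using mem_cosetPart_iff.1 hh z hz) (SetLike.coe_mem _)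
      fun w m hw hmw => ?_
    rw [← coe_decompose_mul_add_of_right_mem 𝒜 hmw]
    exact hJ.mem_iff.1 (hm m (mem_cosetPart_of_mem hmw hw)) _

theorem subsingleton_ext_one_iff_forall_homogeneous {R : Subalgebra k S}
    (hR : Subalgebra.toSubmodule R = cosetPart 𝒜 0 x) {M : Submodule R S}
    (hM : (M : Set S) = cosetPart 𝒜 y x) {a₁ b₁ a₂ b₂ : S} {α₁ β₁ α₂ β₂ : L}
    (ha₁ : a₁ ∈ 𝒜 α₁) (hb₁ : b₁ ∈ 𝒜 β₁) (ha₂ : a₂ ∈ 𝒜 α₂) (hb₂ : b₂ ∈ 𝒜 β₂)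
    (hα₁ : α₁ - y ∈ AddSubgroup.zmultiples x) (hβ₁ : β₁ + y ∈ AddSubgroup.zmultiples x)
    (hα₂ : α₂ - y ∈ AddSubgroup.zmultiples x) (hβ₂ : β₂ + y ∈ AddSubgroup.zmultiples x)
    (hreg : a₁ * b₁ ∈ nonZeroDivisors S)
    (hdvd : ∀ s s', a₁ * b₁ * s = a₂ * b₂ * s' → a₁ * b₁ ∣ s') :
    Subsingleton (((Ext R (ModuleCat R) 1).obj (Opposite.op (ModuleCat.of R M))).obj
      (ModuleCat.of R R)) ↔
    ∀ z h, z + y ∈ AddSubgroup.zmultiples x → h ∈ 𝒜 z →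
      (∀ w m, w - y ∈ AddSubgroup.zmultiples x → m ∈ 𝒜 w →
        h * m ∈ Ideal.span {a₁ * b₁, a₂ * b₂}) → h ∈ Ideal.span {a₁ * b₁, a₂ * b₂} := by
  have hR (s) : s ∈ R ↔ s ∈ cosetPart 𝒜 0 x := by rw [← hR, Subalgebra.mem_toSubmodule]
  have hM (s) : s ∈ M ↔ s ∈ cosetPart 𝒜 y x := by rw [← SetLike.mem_coe, hM, SetLike.mem_coe]
  have mul_mem_R {b β} (hb : b ∈ 𝒜 β) (hβ : β + y ∈ AddSubgroup.zmultiples x) :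
      ∀ m ∈ M, b * m ∈ R := fun m hm => (hR _).2 <|
    mul_mem_cosetPart_of_mem hb (by rwa [sub_zero]) ((hM m).1 hm)
  have hf : a₁ * b₁ ∈ 𝒜 (α₁ + β₁) := SetLike.mul_mem_graded ha₁ hb₁
  have hg : a₂ * b₂ ∈ 𝒜 (α₂ + β₂) := SetLike.mul_mem_graded ha₂ hb₂
  have hfx : α₁ + β₁ ∈ AddSubgroup.zmultiples x := by
    convert add_mem hα₁ hβ₁ using 1; abel
  have hgx : α₂ + β₂ ∈ AddSubgroup.zmultiples x := by
    convert add_mem hα₂ hβ₂ using 1; abel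
  have hneg {h} := mem_cosetPart_neg_iff (h := h) ha₁ (mul_mem_nonZeroDivisors.1 hreg).1 hα₁
  rw [← forall_mem_span_pair_iff_forall_homogeneous hf hg, subsingleton_ext_one_iff_forall_mul
    ((hM _).2 (mem_cosetPart_of_mem ha₁ hα₁)) ((hM _).2 (mem_cosetPart_of_mem ha₂ hα₂))
    (mul_mem_R hb₁ hβ₁) (mul_mem_R hb₂ hβ₂) hreg hdvd]
  · simp only [hM, hR, ← hneg]
    refine forall₂_congr fun h hh => imp_congr (forall₂_congr fun m hm => ?_) ?_
    · refine ⟨?_, exists_mem_cosetPart_of_mem_span_pair hf hg hfx hgx (hneg.1 hh m hm)⟩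
      rintro ⟨r, -, r', -, e⟩
      exact Ideal.mem_span_pair.2 ⟨r, r', by rw [e]; ring⟩
    · constructor
      · rintro ⟨A, B, -, -, e⟩
        exact Ideal.mem_span_pair.2 ⟨A, B, by rw [e]; ring⟩
      · intro hJ
        obtain ⟨A, hA, B, hB, e⟩ := exists_mem_cosetPart_of_mem_span_pair hf hg hfx hgx hh hJ
        exact ⟨A, B, hA, hB, e⟩
  · exact fun s hs => (hR s).2 <| mem_cosetPart_of_mul_mem hf hreg (by simpa using hfx)
      ((hR _).1 hs)

end GradedExtOne

section HomogeneousParameter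

open DirectSum

variable {L k S : Type*} [AddCommGroup L] [Field k] [CommRing S] [Algebra k S]
  {𝒜 : L → Submodule k S} {e : L} {t : S} {ε : S →ₐ[k] k}

/-- A homogeneous regular element `t` of degree `e` that vanishes at the rational point `ε` and
divides every homogeneous element vanishing there: a local parameter of a graded curve. -/
structure IsHomogeneousParameter (𝒜 : L → Submodule k S) (e : L) (t : S) (ε : S →ₐ[k] k) :
    Prop where
  mem : t ∈ 𝒜 e
  mem_nonZeroDivisors : t ∈ nonZeroDivisors S
  map_eq_zero : ε t = 0
  dvd {y : L} {s : S} : s ∈ 𝒜 y → ε s = 0 → t ∣ s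

/-- The degrees of the homogeneous elements that do not vanish at the rational point `ε`. -/
def unitDegrees (𝒜 : L → Submodule k S) [SetLike.GradedMonoid 𝒜] (ε : S →ₐ[k] k) :
    AddSubmonoid L where
  carrier := {y | ∃ s ∈ 𝒜 y, ε s ≠ 0}
  add_mem' := by
    rintro _ _ ⟨s, hs, hs0⟩ ⟨s', hs', hs0'⟩
    exact ⟨s * s', SetLike.mul_mem_graded hs hs', by simp [hs0, hs0']⟩
  zero_mem' := ⟨1, SetLike.one_mem_graded 𝒜, by simp⟩

variable [DecidableEq L] [GradedAlgebra 𝒜]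

namespace IsHomogeneousParameter

variable {g h α : S} {d w y : L} {i n : ℕ}

lemma pow_mem (ht : IsHomogeneousParameter 𝒜 e t ε) (n : ℕ) : t ^ n ∈ 𝒜 (n • e) :=
  SetLike.pow_mem_graded n ht.mem

lemma exists_eq_mul (ht : IsHomogeneousParameter 𝒜 e t ε) (hh : h ∈ 𝒜 y) (h0 : ε h = 0) :
    ∃ h' ∈ 𝒜 (y - e), h = t * h' :=
  exists_mem_eq_mul_of_dvd ht.mem hh (ht.dvd hh h0)

lemma pow_dvd_of_pow_dvd_mul (ht : IsHomogeneousParameter 𝒜 e t ε) (hg : ε g ≠ 0) (hh : h ∈ 𝒜 y)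
    (hdvd : t ^ n ∣ g * h) : t ^ n ∣ h := by
  induction n generalizing h y with
  | zero => simp
  | succ n ih =>
    have h0 : ε h = 0 := by
      have := map_dvd ε ((dvd_pow_self t n.succ_ne_zero).trans hdvd)
      simpa [ht.map_eq_zero, hg] using this
    obtain ⟨h', hh', rfl⟩ := ht.exists_eq_mul hh h0
    rw [pow_succ', mul_left_comm, dvd_cancel_left_mem_nonZeroDivisors ht.mem_nonZeroDivisors]
      at hdvd
    rw [pow_succ']
    exact mul_dvd_mul_left t (ih hh' hdvd)

lemma pow_dvd_of_pow_mul_eq (ht : IsHomogeneousParameter 𝒜 e t ε) (hgd : g ∈ 𝒜 d) (hg : ε g ≠ 0)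
    {s s' : S} (hs : t ^ n * s = g * s') : t ^ n ∣ s' := by
  refine dvd_of_forall_dvd_decompose 𝒜 fun z => ?_
  refine ht.pow_dvd_of_pow_dvd_mul hg (SetLike.coe_mem _) ?_
  rw [← coe_decompose_mul_add_of_left_mem 𝒜 hgd, ← hs,
    coe_decompose_mul_of_left_mem_sub (ht.pow_mem n)]
  exact dvd_mul_right _ _

lemma pow_dvd_of_forall_notMem (ht : IsHomogeneousParameter 𝒜 e t ε) (hh : h ∈ 𝒜 y)
    (hy : ∀ i < n, y - i • e ∉ unitDegrees 𝒜 ε) : t ^ n ∣ h := by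
  induction n generalizing h y with
  | zero => simp
  | succ n ih =>
    have h0 : ε h = 0 := by
      by_contra h0
      exact hy 0 n.succ_pos ⟨h, by simpa using hh, h0⟩
    obtain ⟨h', hh', rfl⟩ := ht.exists_eq_mul hh h0
    rw [pow_succ']
    refine mul_dvd_mul_left t (ih hh' fun i hi => ?_)
    rw [sub_sub, ← succ_nsmul']
    exact hy (i + 1) (by lia)

lemma exists_dvd_sub_pow_mul (ht : IsHomogeneousParameter 𝒜 e t ε) (hgd : g ∈ 𝒜 d) (hg : ε g ≠ 0)
    (hh : h ∈ 𝒜 w) (n : ℕ) :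
    (∃ h' ∈ 𝒜 (w - n • e), g ∣ h - t ^ n * h') ∨
      ∃ i < n, ∃ α ∈ 𝒜 (w - i • e), ε α ≠ 0 ∧ w - i • e - d ∉ unitDegrees 𝒜 ε ∧
        g ∣ h - t ^ i * α := by
  induction n with
  | zero => exact .inl ⟨h, by simpa using hh, by simp⟩
  | succ n ih =>
    obtain ⟨h', hh', hdvd⟩ | ⟨i, hi, H⟩ := ih
    swap
    · exact .inr ⟨i, by lia, H⟩
    suffices (∃ v ∈ 𝒜 (w - n • e - d), ε (h' - g * v) = 0) ∨
        ε h' ≠ 0 ∧ w - n • e - d ∉ unitDegrees 𝒜 ε by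
      obtain ⟨v, hv, h0⟩ | ⟨h0, hw⟩ := this
      · have hgv : g * v ∈ 𝒜 (w - n • e) := by
          simpa using SetLike.mul_mem_graded hgd hv
        obtain ⟨h'', hh'', e⟩ := ht.exists_eq_mul (sub_mem hh' hgv) h0
        refine .inl ⟨h'', by rwa [succ_nsmul, ← sub_sub], ?_⟩
        rw [pow_succ, mul_assoc, ← e, mul_sub, sub_sub_eq_add_sub, add_sub_right_comm]
        exact dvd_add hdvd (Dvd.intro _ (mul_left_comm g (t ^ n) v))
      · exact .inr ⟨n, n.lt_succ_self, h', hh', h0, hw, hdvd⟩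
    by_cases h0 : ε h' = 0
    · exact .inl ⟨0, zero_mem _, by simp [h0]⟩
    by_cases hw : w - n • e - d ∈ unitDegrees 𝒜 ε
    · obtain ⟨v, hv, hv0⟩ := hw
      refine .inl ⟨(ε h' / (ε g * ε v)) • v, Submodule.smul_mem _ _ hv, ?_⟩
      rw [map_sub, map_mul, map_smul, smul_eq_mul, mul_left_comm, div_mul_cancel₀ _
        (mul_ne_zero hg hv0), sub_self]
    · exact .inr ⟨h0, hw⟩

/-- Modulo `g`, division by `t` can be continued up to `t ^ n` unless it stops at an obstruction:
a unit `α` at the point whose degree does not allow it to be cancelled by a multiple of `g`. -/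
lemma mem_span_pair_or_exists (ht : IsHomogeneousParameter 𝒜 e t ε) (hgd : g ∈ 𝒜 d)
    (hg : ε g ≠ 0) (hh : h ∈ 𝒜 w) (n : ℕ) :
    h ∈ Ideal.span {t ^ n, g} ∨
      ∃ i < n, ∃ α ∈ 𝒜 (w - i • e), ε α ≠ 0 ∧ w - i • e - d ∉ unitDegrees 𝒜 ε ∧
        g ∣ h - t ^ i * α := by
  refine (ht.exists_dvd_sub_pow_mul hgd hg hh n).imp_left ?_
  rintro ⟨h', -, b, hb⟩
  exact Ideal.mem_span_pair.2 ⟨h', b, by linear_combination -hb⟩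

lemma le_of_pow_mul_mem_span_pair (ht : IsHomogeneousParameter 𝒜 e t ε) (hgd : g ∈ 𝒜 d)
    (hg : ε g ≠ 0) (hα : α ∈ 𝒜 w) (hα0 : ε α ≠ 0) (hw : w - d ∉ unitDegrees 𝒜 ε)
    (h : t ^ i * α ∈ Ideal.span {t ^ n, g}) : n ≤ i := by
  by_contra! hin
  obtain ⟨a, -, b, hb, e₁⟩ := exists_mem_eq_of_mem_span_pair (ht.pow_mem n) hgd
    (SetLike.mul_mem_graded (ht.pow_mem i) hα) h
  have hn : t ^ n = t ^ i * t ^ (n - i) := by rw [← pow_add, Nat.add_sub_cancel' hin.le]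
  have hdvd : t ^ i ∣ g * b := ⟨α - t ^ (n - i) * a, by linear_combination -e₁ - a * hn⟩
  obtain ⟨b', hb', rfl⟩ :=
    exists_mem_eq_mul_of_dvd (ht.pow_mem i) hb (ht.pow_dvd_of_pow_dvd_mul hg hb hdvd)
  have e₂ : α = t ^ (n - i) * a + g * b' :=
    (mul_cancel_left_mem_nonZeroDivisors (_root_.pow_mem ht.mem_nonZeroDivisors i)).1
      (by linear_combination e₁ + a * hn)
  refine hw ⟨b', by convert hb' using 2; abel, right_ne_zero_of_mul (a := ε g) ?_⟩
  rw [e₂] at hα0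
  simpa [ht.map_eq_zero, (Nat.sub_pos_of_lt hin).ne'] using hα0

/-- Multiplying `h ≡ t ^ i * α` by `t ^ σ * A`, with `A` a unit at the point, tests how far `i` is
from `n`. -/
lemma le_add_of_mul_mem_span_pair (ht : IsHomogeneousParameter 𝒜 e t ε) (hgd : g ∈ 𝒜 d)
    (hg : ε g ≠ 0) (hα : α ∈ 𝒜 w) (hα0 : ε α ≠ 0) (hαh : g ∣ h - t ^ i * α) {σ : ℕ} {A : S}
    (hA : A ∈ 𝒜 y) (hA0 : ε A ≠ 0) (hw : w + y - d ∉ unitDegrees 𝒜 ε)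
    (hJ : h * (t ^ σ * A) ∈ Ideal.span {t ^ n, g}) : n ≤ i + σ := by
  refine ht.le_of_pow_mul_mem_span_pair hgd hg (SetLike.mul_mem_graded hα hA)
    (by simp [hα0, hA0]) hw ?_
  have hg' : (h - t ^ i * α) * (t ^ σ * A) ∈ Ideal.span {t ^ n, g} :=
    Ideal.mul_mem_right _ _ (Ideal.mem_of_dvd _ hαh (Ideal.subset_span (by simp)))
  convert sub_mem hJ hg' using 1
  ring

end IsHomogeneousParameter

end HomogeneousParameter

section CyclicType

universe u

open CategoryTheory

variable {L k : Type*} {S : Type u} [AddCommGroup L] [DecidableEq L] [Field k] [CommRing S]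
  [Algebra k S] {𝒜 : L → Submodule k S} [GradedAlgebra 𝒜] {x e : L} {t : S} {ε : S →ₐ[k] k}
  {p q : ℤ}

/-- The degrees `l x + v e` behave at the point `ε` as for the cyclic quotient singularity
`1/p (1, q)`: a homogeneous element of degree `l x + v e` that does not vanish at `ε` forces
`v ≡ l q` modulo `p`, and such elements exist whenever `l` is not too
small, while the components with `l < 0` and `v ≤ p` vanish. The multiple of `e` in
`ℤ x` provides homogeneous elements of the Veronese ring at and away from the point. -/
structure IsOfCyclicType (𝒜 : L → Submodule k S) [SetLike.GradedMonoid 𝒜] (ε : S →ₐ[k] k)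
    (x e : L) (p q : ℤ) : Prop where
  dvd_of_mem {l v : ℤ} : l • x + v • e ∈ unitDegrees 𝒜 ε → p ∣ v - l * q
  mem_unitDegrees {l v : ℤ} : 0 ≤ l → -p < v → p ∣ v - l * q → l • x + v • e ∈ unitDegrees 𝒜 ε
  exists_forall_mem_unitDegrees (v : ℤ) :
    ∃ l₀, ∀ l ≥ l₀, p ∣ v - l * q → l • x + v • e ∈ unitDegrees 𝒜 ε
  eq_bot {l v : ℤ} : l < 0 → v ≤ p → 𝒜 (l • x + v • e) = ⊥
  exists_smul_eq : ∃ K n : ℤ, 0 < K ∧ 0 < n ∧ K • x = n • e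

namespace IsOfCyclicType

variable {g h : S} {u n : ℕ} {K : ℤ}

lemma dvd_mul_of_smul_mem (hT : IsOfCyclicType 𝒜 ε x e p q) (hg : K • x ∈ unitDegrees 𝒜 ε) :
    p ∣ K * q := by
  have := hT.dvd_of_mem (l := K) (v := 0) (by simpa using hg)
  rwa [zero_sub, dvd_neg] at this

theorem mem_span_pair_of_not_isObstructed (hT : IsOfCyclicType 𝒜 ε x e p q)
    (ht : IsHomogeneousParameter 𝒜 e t ε) (hup : u ≤ p) (hKn : K • x = (n : ℤ) • e)
    (hgK : g ∈ 𝒜 (K • x)) (hg : ε g ≠ 0) (hu : ¬ IsObstructed p q u) {K' : ℤ}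
    (hh : h ∈ 𝒜 (K' • x - (u : ℤ) • e))
    (hM : ∀ (l : ℤ) (m : S), m ∈ 𝒜 (l • x + (u : ℤ) • e) → h * m ∈ Ideal.span {t ^ n, g}) :
    h ∈ Ideal.span {t ^ n, g} := by
  obtain hJ | ⟨i, hin, α, hα, hα0, hαH, b, hb⟩ := ht.mem_span_pair_or_exists hgK hg hh n
  · exact hJ
  exfalso
  obtain ⟨k, rfl⟩ : ∃ k, K' = 2 * K - k := ⟨2 * K - K', by ring⟩
  obtain ⟨τ, hτ⟩ : ∃ τ : ℤ, τ = i + u - n := ⟨_, rfl⟩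
  have hdeg : (2 * K - k) • x - (u : ℤ) • e - i • e = (K - k) • x + (-τ) • e := calc
    _ = (K - k) • x + K • x - (u + i : ℤ) • e := by module
    _ = (K - k) • x + (-τ) • e := by rw [hKn, hτ]; module
  rw [hdeg] at hα hαH
  replace hαH : (-k) • x + (-τ) • e ∉ unitDegrees 𝒜 ε := by convert hαH using 2; module
  have le_add {l : ℤ} {σ : ℕ} (hlσ : l • x + (u - σ : ℤ) • e ∈ unitDegrees 𝒜 ε)
      (hH : (l - k) • x + (u - σ - τ) • e ∉ unitDegrees 𝒜 ε) : n ≤ i + σ := by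
    obtain ⟨A, hA, hA0⟩ := hlσ
    refine ht.le_add_of_mul_mem_span_pair hgK hg hα hα0 ⟨b, hb⟩ hA hA0
      (by convert hH using 2; module) (hM l _ ?_)
    convert SetLike.mul_mem_graded (ht.pow_mem σ) hA using 2
    module
  have hτ0 : 0 ≤ τ := by
    have := le_add (l := 0) (σ := u) (by simp) (by simpa using hαH)
    lia
  obtain ⟨s, hs⟩ : p ∣ k * q - τ := by
    have hα : p ∣ -τ - (K - k) * q := hT.dvd_of_mem ⟨α, hα, hα0⟩
    rw [show k * q - τ = -τ - (K - k) * q + K * q by ring]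
    exact dvd_add hα (hT.dvd_mul_of_smul_mem ⟨g, hgK, hg⟩)
  have hk : 1 ≤ k := by
    by_contra! hk
    exact hαH (hT.mem_unitDegrees (by lia) (by lia) ⟨s, by linear_combination hs⟩)
  simp only [IsObstructed, not_exists, not_and, not_forall, not_lt] at hu
  obtain ⟨m, r, hm, hmk, hr, hru⟩ :=
    hu k s hk (by linarith [mul_comm p s]) (by linarith [mul_comm p s])
  obtain ⟨σ, hσ⟩ := Int.eq_ofNat_of_zero_le (sub_nonneg.2 hru)
  have hσn : n ≤ i + σ := by
    refine le_add (l := k - m) (hT.mem_unitDegrees (by lia) (by linarith) ⟨r - s, ?_⟩) ?_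
    · linear_combination hσ
    · rintro ⟨A, hA, hA0⟩
      rw [hT.eq_bot (by lia) (by linarith), Submodule.mem_bot] at hA
      exact hA0 (by simp [hA])
  linarith

lemma pow_dvd_of_mem (hT : IsOfCyclicType 𝒜 ε x e p q) (ht : IsHomogeneousParameter 𝒜 e t ε)
    {l v : ℤ} {s : S} (hs : s ∈ 𝒜 (l • x + v • e)) (hn : ∀ j < n, ¬ p ∣ v - j - l * q) :
    t ^ n ∣ s := by
  refine ht.pow_dvd_of_forall_notMem hs fun j hj hH => hn j hj (hT.dvd_of_mem ?_)
  convert hH using 2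
  module

lemma mem_span_pair_of_le (hT : IsOfCyclicType 𝒜 ε x e p q)
    (ht : IsHomogeneousParameter 𝒜 e t ε) (hp : 0 < p) (hgK : g ∈ 𝒜 (K • x)) (hg : ε g ≠ 0)
    {l : ℤ} (hl : K ≤ l) {s : S} (hs : s ∈ 𝒜 (l • x + (n : ℤ) • e)) :
    s ∈ Ideal.span {t ^ n, g} := by
  obtain hJ | ⟨j, hj, β, hβ, hβ0, hH, -⟩ := ht.mem_span_pair_or_exists hgK hg hs n
  · exact hJ
  have hj' : p ∣ (n - j : ℤ) - l * q := hT.dvd_of_mem ⟨β, by convert hβ using 2; module, hβ0⟩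
  refine absurd (hT.mem_unitDegrees (l := l - K) (v := n - j) (by lia) (by lia) ?_)
    (by convert hH using 2; module)
  rw [show (n - j : ℤ) - (l - K) * q = n - j - l * q + K * q by ring]
  exact dvd_add hj' (hT.dvd_mul_of_smul_mem ⟨g, hgK, hg⟩)

theorem exists_notMem_span_pair_of_gap (hT : IsOfCyclicType 𝒜 ε x e p q)
    (ht : IsHomogeneousParameter 𝒜 e t ε) {i τ ρ : ℕ} (hρ : 0 < ρ) (hp : (τ + ρ : ℤ) ≤ p)
    (hK : K • x = (i + ρ : ℤ) • e) (hgK : g ∈ 𝒜 (K • x)) (hg : ε g ≠ 0) {k : ℤ} (hk : 1 ≤ k)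
    (hkK : k ≤ K) (hkτ : p ∣ k * q - τ)
    (hgap : ∀ m, 1 ≤ m → m ≤ k → ∀ v, 0 < v → p ∣ v + m * q → ρ < v) :
    ∃ (K' : ℤ) (h : S), h ∈ 𝒜 (K' • x - (τ + ρ : ℤ) • e) ∧
      (∀ (l : ℤ) (m : S), m ∈ 𝒜 (l • x + (τ + ρ : ℤ) • e) →
        h * m ∈ Ideal.span {t ^ (i + ρ), g}) ∧
      h ∉ Ideal.span {t ^ (i + ρ), g} := by
  obtain ⟨α, hα, hα0⟩ : (K - k) • x + (-(τ : ℤ)) • e ∈ unitDegrees 𝒜 ε := by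
    refine hT.mem_unitDegrees (by lia) (by lia) ?_
    rw [show -(τ : ℤ) - (K - k) * q = k * q - τ - K * q by ring]
    exact dvd_sub hkτ (hT.dvd_mul_of_smul_mem ⟨g, hgK, hg⟩)
  refine ⟨2 * K - k, t ^ i * α, ?_, fun l m hm => ?_, fun hJ => ?_⟩
  · rw [show (2 * K - k) • x - (τ + ρ : ℤ) • e = i • e + ((K - k) • x + (-(τ : ℤ)) • e) by
      rw [two_mul, add_sub_assoc, add_smul, hK]
      module]
    exact SetLike.mul_mem_graded (ht.pow_mem i) hα
  · rcases lt_or_ge l 0 with hl | hl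
    · rw [hT.eq_bot hl hp, Submodule.mem_bot] at hm
      simp [hm]
    rcases lt_or_ge l k with hlk | hlk
    · obtain ⟨m', rfl⟩ : t ^ ρ ∣ m := hT.pow_dvd_of_mem ht hm fun j hj hdvd => by
        have := hgap (k - l) (by lia) (by lia) (ρ - j) (by lia) (by
          rw [show (ρ - j : ℤ) + (k - l) * q = τ + ρ - j - l * q + (k * q - τ) by ring]
          exact dvd_add hdvd hkτ)
        lia
      exact Ideal.mem_span_pair.2 ⟨α * m', 0, by ring⟩
    · have hαm : α * m ∈ 𝒜 ((K - k + l) • x + (ρ : ℤ) • e) := by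
        convert SetLike.mul_mem_graded hα hm using 2
        module
      obtain ⟨a, b, hab⟩ := Ideal.mem_span_pair.1
        (hT.mem_span_pair_of_le ht (by lia) hgK hg (by lia) hαm)
      exact Ideal.mem_span_pair.2 ⟨a, t ^ i * b, by linear_combination t ^ i * hab⟩
  · have hH : (K - k) • x + (-(τ : ℤ)) • e - K • x ∉ unitDegrees 𝒜 ε := by
      rw [show (K - k) • x + (-(τ : ℤ)) • e - K • x = (-k) • x + (-(τ : ℤ)) • e by module]
      rintro ⟨s, hs, hs0⟩
      rw [hT.eq_bot (by lia) (by lia), Submodule.mem_bot] at hs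
      exact hs0 (by simp [hs])
    have := ht.le_of_pow_mul_mem_span_pair hgK hg hα hα0 hH hJ
    lia

lemma exists_smul_eq_of_dvd (hT : IsOfCyclicType 𝒜 ε x e p q) (hp : 0 < p) (B : ℤ) :
    ∃ K : ℤ, ∃ n : ℕ, B ≤ K ∧ B ≤ n ∧ p ∣ K ∧ K • x = (n : ℤ) • e := by
  obtain ⟨K, n, hK, hn, hKn⟩ := hT.exists_smul_eq
  have le_mul {a : ℤ} (ha : 0 < a) : B ≤ p * |B| * a :=
    (le_abs_self B).trans <| (le_mul_of_one_le_left (abs_nonneg B) hp).trans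
      (le_mul_of_one_le_right (by positivity) ha)
  obtain ⟨N, hN⟩ := Int.eq_ofNat_of_zero_le (show 0 ≤ p * |B| * n by positivity)
  exact ⟨p * |B| * K, N, le_mul hK, hN ▸ le_mul hn, by simp [mul_assoc],
    by rw [← hN, mul_smul, hKn, ← mul_smul]⟩

lemma exists_factors (hT : IsOfCyclicType 𝒜 ε x e p q) (hp : 0 < p) (hpq : IsCoprime p q)
    (u : ℕ) (K₀ : ℤ) :
    ∃ K l : ℤ, ∃ n : ℕ, K₀ ≤ K ∧ u ≤ n ∧ K • x = (n : ℤ) • e ∧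
      l • x + (u : ℤ) • e ∈ unitDegrees 𝒜 ε ∧
      (K - l) • x + (-(u : ℤ)) • e ∈ unitDegrees 𝒜 ε := by
  obtain ⟨a, b, hab⟩ := hpq
  obtain ⟨l, hl, hlu⟩ : ∃ l ≥ 0, p ∣ u - l * q := by
    refine ⟨b * u + p * |b * u|, ?_, a * u - |b * u| * q, by linear_combination (-u : ℤ) * hab⟩
    linarith [neg_abs_le (b * u), le_mul_of_one_le_left (abs_nonneg (b * u)) hp]
  obtain ⟨l₀, hl₀⟩ := hT.exists_forall_mem_unitDegrees (-u)
  obtain ⟨K, n, hK, hn, hpK, hKn⟩ := hT.exists_smul_eq_of_dvd hp (max K₀ (max (l + l₀) u))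
  simp only [max_le_iff] at hK hn
  refine ⟨K, l, n, hK.1, by lia, hKn, hT.mem_unitDegrees hl (by lia) hlu, hl₀ _ (by lia) ?_⟩
  rw [show -(u : ℤ) - (K - l) * q = -(u - l * q) - K * q by ring]
  exact dvd_sub hlu.neg_right (hpK.mul_right q)

variable {R : Subalgebra k S} {M : Submodule R S}

lemma exists_subsingleton_ext_one_iff (hT : IsOfCyclicType 𝒜 ε x e p q)
    (ht : IsHomogeneousParameter 𝒜 e t ε) (hp : 0 < p) (hpq : IsCoprime p q)
    (hR : Subalgebra.toSubmodule R = cosetPart 𝒜 0 x)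
    (hM : (M : Set S) = cosetPart 𝒜 (u • e) x) (K₀ : ℤ) :
    ∃ K, ∃ n : ℕ, K₀ ≤ K ∧ u ≤ n ∧ K • x = (n : ℤ) • e ∧ ∃ g ∈ 𝒜 (K • x), ε g ≠ 0 ∧
      (Subsingleton (((Ext R (ModuleCat R) 1).obj (Opposite.op (ModuleCat.of R M))).obj
        (ModuleCat.of R R)) ↔
      ∀ (K' : ℤ) (h : S), h ∈ 𝒜 (K' • x - (u : ℤ) • e) →
        (∀ (l : ℤ) (m : S), m ∈ 𝒜 (l • x + (u : ℤ) • e) → h * m ∈ Ideal.span {t ^ n, g}) →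
        h ∈ Ideal.span {t ^ n, g}) := by
  obtain ⟨K, l, n, hK, hn, hKn, ⟨A, hA, hA0⟩, ⟨B, hB, hB0⟩⟩ := hT.exists_factors hp hpq u K₀
  have hAB : A * B ∈ 𝒜 (K • x) := by
    convert SetLike.mul_mem_graded hA hB using 2
    module
  have hAB0 : ε (A * B) ≠ 0 := by simp [hA0, hB0]
  have htu : t ^ u * t ^ (n - u) = t ^ n := by rw [← pow_add, Nat.add_sub_cancel' hn]
  have hnu : (n - u) • e + u • e = K • x := by
    rw [← add_smul, Nat.sub_add_cancel hn, hKn, natCast_zsmul]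
  refine ⟨K, n, hK, hn, hKn, A * B, hAB, hAB0, ?_⟩
  rw [subsingleton_ext_one_iff_forall_homogeneous hR hM (ht.pow_mem u) (ht.pow_mem (n - u)) hA hB
    (by simp) (by simp [hnu]) (by simp) (by simp [← natCast_zsmul])
    (htu ▸ pow_mem ht.mem_nonZeroDivisors n)
    (fun s s' hs => htu ▸ ht.pow_dvd_of_pow_mul_eq hAB hAB0 (htu ▸ hs)), htu]
  constructor
  · refine fun H K' h hh hm => H _ h (by simp) hh fun w m hw hmw => ?_
    obtain ⟨l, hl⟩ := AddSubgroup.mem_zmultiples_iff.1 hw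
    exact hm l m (by rwa [hl, natCast_zsmul, sub_add_cancel])
  · intro H z h hz hh hm
    obtain ⟨K', hK'⟩ := AddSubgroup.mem_zmultiples_iff.1 hz
    exact H K' h (by rwa [hK', natCast_zsmul, add_sub_cancel_right])
      fun l m hml => hm _ m (by simp) hml

theorem subsingleton_ext_one_iff_not_isObstructed (hT : IsOfCyclicType 𝒜 ε x e p q)
    (ht : IsHomogeneousParameter 𝒜 e t ε) (hp : 0 < p) (hpq : IsCoprime p q) (hup : u ≤ p)
    (hR : Subalgebra.toSubmodule R = cosetPart 𝒜 0 x)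
    (hM : (M : Set S) = cosetPart 𝒜 (u • e) x) :
    Subsingleton (((Ext R (ModuleCat R) 1).obj (Opposite.op (ModuleCat.of R M))).obj
      (ModuleCat.of R R)) ↔ ¬ IsObstructed p q u := by
  constructor
  · rintro hExt ⟨k, s, hk, hτ0, hτu, hgap⟩
    obtain ⟨K, n, hkK, hun, hKn, g, hgK, hg, H⟩ :=
      hT.exists_subsingleton_ext_one_iff ht hp hpq hR hM k
    obtain ⟨τ, hτ⟩ := Int.eq_ofNat_of_zero_le hτ0
    obtain ⟨ρ, rfl⟩ := Nat.exists_eq_add_of_le (show τ ≤ u by lia)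
    obtain ⟨i, rfl⟩ := Nat.exists_eq_add_of_le' (show ρ ≤ n by lia)
    push_cast at H hup hKn hτu
    obtain ⟨K', h, hh, hm, hJ⟩ := hT.exists_notMem_span_pair_of_gap ht (by lia) hup hKn hgK hg hk
      hkK ⟨s, by linear_combination hτ⟩ fun m hm hmk v hv ⟨r, hr⟩ => by
        have := hgap m r hm hmk (by linarith)
        push_cast at this
        linarith
    exact hJ (H.1 hExt K' h hh hm)
  · intro hu
    obtain ⟨K, n, -, -, hKn, g, hgK, hg, H⟩ :=
      hT.exists_subsingleton_ext_one_iff ht hp hpq hR hM 0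
    exact H.2 fun K' h => hT.mem_span_pair_of_not_isObstructed ht hup hKn hgK hg hu

end IsOfCyclicType

end CyclicType

/-! ### Binary forms -/

section BinaryForms

variable {R : Type*} [CommRing R] {a b : R}

/-- The linear form `a t₀ + b t₁`. -/
def linearForm (a b : R) : MvPolynomial (Fin 2) R := C a * X 0 + C b * X 1

lemma isHomogeneous_linearForm : (linearForm a b).IsHomogeneous 1 :=
  (isHomogeneous_C_mul_X a 0).add (isHomogeneous_C_mul_X b 1)

lemma eval_linearForm (q : Fin 2 → R) : eval q (linearForm a b) = a * q 0 + b * q 1 := by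
  simp [linearForm]

lemma linearForm_ne_zero (h : a ≠ 0 ∨ b ≠ 0) : linearForm a b ≠ 0 := by
  intro h0
  have ha := congrArg (eval ![1, 0]) h0
  have hb := congrArg (eval ![0, 1]) h0
  simp only [eval_linearForm, map_zero] at ha hb
  simp_all

lemma aeval_mul_of_isHomogeneous {σ A : Type*} [CommRing A] [Algebra R A] {F : MvPolynomial σ R}
    {d : ℕ} (hF : F.IsHomogeneous d) (s : A) (q : σ → R) :
    aeval (fun i => algebraMap R A (q i) * s) F = algebraMap R A (eval q F) * s ^ d := by
  rw [aeval_def, eval₂_eq, eval_eq, map_sum, Finset.sum_mul]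
  refine Finset.sum_congr rfl fun m hm => ?_
  rw [Finset.prod_congr rfl fun i _ => mul_pow .., Finset.prod_mul_distrib,
    Finset.prod_pow_eq_pow_sum, hF.degree_eq_sum_deg_support hm]
  simp [mul_assoc]

-- Modulo `a t₀ + b t₁`, the point `(t₀, t₁)` is a multiple of `(b, -a)`.
lemma linearForm_dvd_of_eval_eq_zero (hab : IsCoprime a b) {F : MvPolynomial (Fin 2) R} {d : ℕ}
    (hF : F.IsHomogeneous d) (h0 : eval ![b, -a] F = 0) : linearForm a b ∣ F := by
  obtain ⟨u, v, huv⟩ := hab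
  let π := Ideal.Quotient.mkₐ R (Ideal.span {linearForm a b})
  have hπ : π (linearForm a b) = 0 :=
    Ideal.Quotient.eq_zero_iff_mem.2 (Ideal.mem_span_singleton_self _)
  have huv' : (C u * C a + C v * C b : MvPolynomial (Fin 2) R) = 1 := by
    rw [← C_mul, ← C_mul, ← C_add, huv, C_1]
  have hX (i : Fin 2) :
      X i - C (![b, -a] i) * linearForm v (-u) = linearForm a b * C (![u, v] i) := by
    fin_cases i
    · change X 0 - C b * (C v * X 0 + C (-u) * X 1) = (C a * X 0 + C b * X 1) * C u
      rw [C_neg]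
      linear_combination -X 0 * huv'
    · change X 1 - C (-a) * (C v * X 0 + C (-u) * X 1) = (C a * X 0 + C b * X 1) * C v
      rw [C_neg, C_neg]
      linear_combination -X 1 * huv'
  have hπX (i : Fin 2) : π (X i) = algebraMap R _ (![b, -a] i) * π (linearForm v (-u)) := by
    rw [← π.commutes, ← map_mul, ← sub_eq_zero, ← map_sub]
    exact (congrArg π (hX i)).trans (by rw [map_mul, hπ, zero_mul])
  rw [← Ideal.mem_span_singleton, ← Ideal.Quotient.eq_zero_iff_mem]
  calc π F = aeval (fun i => π (X i)) F := by rw [← comp_aeval_apply, aeval_X_left_apply]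
    _ = 0 := by rw [funext hπX, aeval_mul_of_isHomogeneous hF, h0, map_zero, zero_mul]

end BinaryForms

/-! ### The group `L` -/

namespace LGroup

variable {ι : Type} [DecidableEq ι] {p : ι → ℕ}

lemma nsmul_egen (p : ι → ℕ) (i : ι) : p i • egen p i = cgen p := by
  refine sub_eq_zero.1 <| (QuotientAddGroup.eq_zero_iff
    (p i • Pi.single (some i) 1 - Pi.single none 1 : Option ι → ℤ)).2 ?_
  exact AddSubgroup.subset_closure ⟨i, by rw [natCast_zsmul]⟩

lemma egen_mem_Lplus (p : ι → ℕ) (i : ι) : egen p i ∈ Lplus p :=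
  AddSubmonoid.subset_closure ⟨i, rfl⟩

lemma cgen_mem_Lplus (i : ι) : cgen p ∈ Lplus p :=
  nsmul_egen p i ▸ nsmul_mem (egen_mem_Lplus p i) _

lemma zsmul_mem_Lplus {x : LGroup ι p} {l : ℤ} (hx : x ∈ Lplus p) (hl : 0 ≤ l) :
    l • x ∈ Lplus p := by
  lift l to ℕ using hl
  exact natCast_zsmul x l ▸ nsmul_mem hx l

lemma zsmul_add_zsmul_notMem_Lplus {j : ι} {x : LGroup ι p} {l v : ℤ} (hx : x ∈ Lplus p)
    (hcx : cgen p - x ∉ Lplus p) (hl : l < 0) (hv : v ≤ p j) : l • x + v • egen p j ∉ Lplus p := by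
  refine fun h => hcx ?_
  have hsum : cgen p - x = l • x + v • egen p j + (-l - 1) • x + (p j - v) • egen p j := by
    rw [← nsmul_egen p j, ← natCast_zsmul]
    module
  rw [hsum]
  exact add_mem (add_mem h (zsmul_mem_Lplus hx (by lia)))
    (zsmul_mem_Lplus (egen_mem_Lplus p j) (by lia))

section Fintype

variable [Fintype ι]

/-- The universal property of `L`: the homomorphism with prescribed values on the generators. -/
def lift {G : Type*} [AddCommGroup G] (f : ι → G) (c : G) (h : ∀ i, p i • f i = c) :
    LGroup ι p →+ G :=
  QuotientAddGroup.lift (LRel ι p)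
    (Fintype.linearCombination ℤ fun o : Option ι => o.elim c f).toAddMonoidHom <| by
      refine (AddSubgroup.closure_le _).2 ?_
      rintro _ ⟨i, rfl⟩
      change Fintype.linearCombination ℤ _ (_ • Pi.single (some i) 1 - Pi.single none 1) = 0
      rw [map_sub, map_smul]
      simp [Fintype.linearCombination_apply_single, h]

section Lift

variable {G : Type*} [AddCommGroup G] (f : ι → G) (c : G) (h : ∀ i, p i • f i = c)

lemma lift_egen (i : ι) : lift f c h (egen p i) = f i := by
  change Fintype.linearCombination ℤ _ (Pi.single (some i) 1) = f i
  simp [Fintype.linearCombination_apply_single]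

lemma lift_cgen : lift f c h (cgen p) = c := by
  change Fintype.linearCombination ℤ _ (Pi.single none 1) = c
  simp [Fintype.linearCombination_apply_single]

end Lift

/-- The degree of a line bundle on the weighted projective line, normalized by `c ↦ 1`. -/
def degree (hp : ∀ i, 0 < p i) : LGroup ι p →+ ℚ :=
  lift (fun i => (p i : ℚ)⁻¹) 1 fun i => by
    rw [nsmul_eq_mul, mul_inv_cancel₀ (by exact_mod_cast (hp i).ne')]

lemma degree_cgen (hp : ∀ i, 0 < p i) : degree hp (cgen p) = 1 := lift_cgen ..

/-- The coefficient of `e_j` in the normal form, as a residue modulo `p_j`. -/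
def residue (p : ι → ℕ) (j : ι) : LGroup ι p →+ ZMod (p j) :=
  lift (Pi.single j 1) 0 fun i => by
    obtain rfl | hij := eq_or_ne i j
    · simp
    · simp [hij]

variable {j : ι} {x : LGroup ι p} {l v : ℤ}

lemma residue_egen (i : ι) : residue p j (egen p i) = Pi.single (M := fun _ => ZMod (p j)) j 1 i :=
  lift_egen ..

lemma residue_egen_self : residue p j (egen p j) = 1 := by
  rw [residue_egen, Pi.single_eq_same]

lemma residue_cgen : residue p j (cgen p) = 0 := lift_cgen ..

lemma residue_sum_nsmul_egen (m : ι → ℕ) : residue p j (∑ i, m i • egen p i) = m j := by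
  simp only [map_sum, map_nsmul, residue_egen]
  rw [Finset.sum_eq_single j (fun i _ hij => by rw [Pi.single_eq_of_ne hij, smul_zero]) (by simp),
    Pi.single_eq_same, nsmul_one]

lemma residue_sum_nsmul_egen_add_zsmul_cgen (m : ι → ℕ) (d : ℤ) :
    residue p j (∑ i, m i • egen p i + d • cgen p) = m j := by
  rw [map_add, residue_sum_nsmul_egen, map_zsmul, residue_cgen, smul_zero, add_zero]

lemma mem_Lplus_iff {y : LGroup ι p} : y ∈ Lplus p ↔ ∃ m : ι → ℕ, y = ∑ i, m i • egen p i :=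
  AddSubmonoid.mem_closure_range_iff_of_fintype

lemma sub_nsmul_egen_mem_Lplus {y : LGroup ι p} (hy : y ∈ Lplus p) {τ : ℕ} (hτ : τ < p j)
    (hyτ : residue p j y = τ) : y - τ • egen p j ∈ Lplus p := by
  obtain ⟨m, rfl⟩ := mem_Lplus_iff.1 hy
  rw [residue_sum_nsmul_egen, ZMod.natCast_eq_natCast_iff'] at hyτ
  have hτm : τ ≤ m j := by
    rw [← Nat.mod_eq_of_lt hτ, ← hyτ]
    exact Nat.mod_le _ _
  rw [← Finset.add_sum_erase _ _ (Finset.mem_univ j), add_sub_right_comm, sub_eq_add_neg,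
    ← sub_nsmul _ hτm]
  exact add_mem (nsmul_mem (egen_mem_Lplus p j) _)
    (sum_mem fun i _ => nsmul_mem (egen_mem_Lplus p i) _)

lemma sum_nsmul_egen_eq (m : ι → ℕ) :
    ∑ i, m i • egen p i = ∑ i, (m i % p i) • egen p i + (∑ i, m i / p i) • cgen p := by
  rw [Finset.sum_smul, ← Finset.sum_add_distrib]
  refine Finset.sum_congr rfl fun i _ => ?_
  rw [← nsmul_egen p i, ← mul_nsmul', ← add_nsmul, mul_comm, Nat.mod_add_div]

lemma exists_eq_sum_add_nsmul_cgen (hp : ∀ i, 0 < p i) {y : LGroup ι p} (hy : y ∈ Lplus p) :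
    ∃ (b : ι → ℕ) (d : ℕ), (∀ i, b i < p i) ∧ y = ∑ i, b i • egen p i + d • cgen p := by
  obtain ⟨m, rfl⟩ := mem_Lplus_iff.1 hy
  exact ⟨_, _, fun i => Nat.mod_lt _ (hp i), sum_nsmul_egen_eq m⟩

lemma exists_nsmul_eq_nsmul_cgen {y : LGroup ι p} (hy : y ∈ Lplus p) :
    ∃ N : ℕ, (∏ i, p i) • y = N • cgen p := by
  induction hy using AddSubmonoid.closure_induction with
  | mem _ h =>
    obtain ⟨i, rfl⟩ := h
    obtain ⟨N, hN⟩ := Finset.dvd_prod_of_mem p (Finset.mem_univ i)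
    exact ⟨N, by rw [hN, mul_comm, mul_smul, nsmul_egen]⟩
  | zero => exact ⟨0, by simp⟩
  | add _ _ _ _ h h' =>
    obtain ⟨N, hN⟩ := h
    obtain ⟨N', hN'⟩ := h'
    exact ⟨N + N', by rw [nsmul_add, hN, hN', add_nsmul]⟩

lemma residue_zsmul_add_zsmul_eq_zero_iff {q : ℤ} (hq : residue p j x = -q) :
    residue p j (l • x + v • egen p j) = 0 ↔ (p j : ℤ) ∣ v - l * q := by
  rw [map_add, map_zsmul, map_zsmul, hq, residue_egen_self, ← ZMod.intCast_zmod_eq_zero_iff_dvd]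
  push_cast
  rw [zsmul_eq_mul, zsmul_one, sub_eq_neg_add, mul_neg]

lemma zsmul_add_zsmul_mem_Lplus (hx : x ∈ Lplus p) (hl : 0 ≤ l) (hv : -p j < v)
    (hr : residue p j (l • x + v • egen p j) = 0) : l • x + v • egen p j ∈ Lplus p := by
  have hlx := zsmul_mem_Lplus hx hl
  obtain hv0 | hv0 := le_or_gt 0 v
  · exact add_mem hlx (zsmul_mem_Lplus (egen_mem_Lplus p j) hv0)
  obtain ⟨τ, rfl⟩ := Int.exists_eq_neg_ofNat hv0.le
  rw [neg_smul, natCast_zsmul, ← sub_eq_add_neg] at hr ⊢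
  refine sub_nsmul_egen_mem_Lplus hlx (by lia) ?_
  rwa [map_sub, map_nsmul, residue_egen_self, nsmul_one, sub_eq_zero] at hr

end Fintype

section Finite

variable [Finite ι]

lemma nsmul_cgen_injective (hp : ∀ i, 0 < p i) :
    Function.Injective fun d : ℕ => d • cgen p := fun d d' h => by
  cases nonempty_fintype ι
  simpa [degree_cgen] using congrArg (degree hp) h

lemma exists_zsmul_eq_zsmul_egen (hp : ∀ i, 0 < p i) {x : LGroup ι p} (hx : x ∈ Lplus p)
    (hcx : cgen p - x ∉ Lplus p) (j : ι) :
    ∃ K n : ℤ, 0 < K ∧ 0 < n ∧ K • x = n • egen p j := by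
  cases nonempty_fintype ι
  obtain ⟨N, hN⟩ := exists_nsmul_eq_nsmul_cgen hx
  have hK : 0 < ∏ i, p i := Finset.prod_pos fun i _ => hp i
  refine ⟨(∏ i, p i : ℕ), (N * p j : ℕ), by exact_mod_cast hK, ?_, ?_⟩
  · refine Nat.cast_pos.2 (Nat.mul_pos (Nat.pos_of_ne_zero ?_) (hp j))
    rintro rfl
    refine hcx ?_
    rw [← Nat.succ_pred hK.ne', succ_nsmul, zero_smul, ← eq_neg_iff_add_eq_zero] at hN
    rw [sub_eq_add_neg, ← hN]
    exact add_mem (cgen_mem_Lplus j) (nsmul_mem hx _)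
  · rw [natCast_zsmul, natCast_zsmul, hN, mul_nsmul', nsmul_egen]

lemma exists_forall_zsmul_add_zsmul_mem_Lplus (hp : ∀ i, 0 < p i) (hx : x ∈ Lplus p)
    (hcx : cgen p - x ∉ Lplus p) (j : ι) (v : ℤ) :
    ∃ l₀ : ℤ, ∀ l ≥ l₀, l • x + v • egen p j ∈ Lplus p := by
  obtain ⟨K, n, -, hn, hKn⟩ := exists_zsmul_eq_zsmul_egen hp hx hcx j
  refine ⟨|v| * K, fun l hl => ?_⟩
  have hlv : l • x + v • egen p j = (l - |v| * K) • x + (|v| * n + v) • egen p j := calc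
    _ = (l - |v| * K) • x + |v| • (K • x) + v • egen p j := by module
    _ = _ := by rw [hKn]; module
  rw [hlv]
  refine add_mem (zsmul_mem_Lplus hx (by lia)) (zsmul_mem_Lplus (egen_mem_Lplus p j) ?_)
  nlinarith [abs_nonneg v, neg_abs_le v]

end Finite

end LGroup

/-! ### The grading of a quotient by a homogeneous ideal -/

section QuotientGrading

open DirectSum

variable {L k A : Type*} [AddMonoid L] [DecidableEq L] [CommRing k] [CommRing A] [Algebra k A]
  (𝒜 : L → Submodule k A) [GradedAlgebra 𝒜] {I : Ideal A}

/-- The images in `A ⧸ I` of the homogeneous components of `A`. -/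
def quotientGrading (I : Ideal A) (y : L) : Submodule k (A ⧸ I) :=
  (𝒜 y).map (Ideal.Quotient.mkₐ k I).toLinearMap

instance : SetLike.GradedMonoid (quotientGrading 𝒜 I) where
  one_mem := ⟨1, SetLike.one_mem_graded 𝒜, map_one (Ideal.Quotient.mk I)⟩
  mul_mem := by
    rintro i j _ _ ⟨a, ha, rfl⟩ ⟨b, hb, rfl⟩
    exact ⟨a * b, SetLike.mul_mem_graded ha hb, map_mul (Ideal.Quotient.mk I) a b⟩

lemma isInternal_quotientGrading (hI : I.IsHomogeneous 𝒜) :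
    IsInternal (quotientGrading 𝒜 I) := by
  let π : ∀ y, 𝒜 y →ₗ[k] quotientGrading 𝒜 I y := fun y =>
    (Ideal.Quotient.mkₐ k I).toLinearMap.submoduleMap (𝒜 y)
  have hπ : Function.Surjective (lmap π) :=
    (lmap_surjective π).2 fun y => LinearMap.submoduleMap_surjective _ _
  have coe_lmap (b : ⨁ y, 𝒜 y) : DirectSum.coeAddMonoidHom (quotientGrading 𝒜 I) (lmap π b) =
      Ideal.Quotient.mk I ((decompose 𝒜).symm b) := by
    induction b using DirectSum.induction_on with
    | zero => simp
    | of y b =>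
      rw [← DirectSum.lof_eq_of k, lmap_lof, DirectSum.lof_eq_of, DirectSum.lof_eq_of,
        decompose_symm_of, coeAddMonoidHom_of]
      rfl
    | add b b' hb hb' => rw [map_add, map_add, hb, hb', decompose_symm_add, map_add]
  refine ⟨(injective_iff_map_eq_zero _).2 fun f hf => ?_, fun s => ?_⟩
  · obtain ⟨b, rfl⟩ := hπ f
    rw [coe_lmap, Ideal.Quotient.eq_zero_iff_mem] at hf
    ext y
    have := hI y hf
    rw [Equiv.apply_symm_apply] at this
    exact Ideal.Quotient.eq_zero_iff_mem.2 this
  · obtain ⟨a, rfl⟩ := Ideal.Quotient.mk_surjective s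
    exact ⟨lmap π (decompose 𝒜 a), by rw [coe_lmap, Equiv.symm_apply_apply]⟩

/-- The grading of `A ⧸ I` induced from the one of `A`, for a homogeneous ideal `I`. -/
abbrev gradedAlgebraQuotient (hI : I.IsHomogeneous 𝒜) : GradedAlgebra (quotientGrading 𝒜 I) where
  toDecomposition := (isInternal_quotientGrading 𝒜 hI).chooseDecomposition

end QuotientGrading

namespace SAlg

variable {ι : Type} [Fintype ι] [DecidableEq ι] {p : ι → ℕ} {c0 c1 : ι → ℂ}

instance : DecidableEq (LGroup ι p) := Classical.decEq _

lemma wtA_eq_weight (m : ι ⊕ Fin 2 →₀ ℕ) :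
    wtA p m = Finsupp.weight (Sum.elim (egen p) fun _ => cgen p) m := by
  simp [wtA, Finsupp.weight_apply, Finsupp.sum_fintype, add_smul]

lemma polyCompA_eq_weightedHomogeneousSubmodule :
    polyCompA p = weightedHomogeneousSubmodule ℂ (Sum.elim (egen p) fun _ => cgen p) := by
  ext y f
  simp only [polyCompA, wtA_eq_weight]
  rfl

instance : GradedAlgebra (polyCompA p) :=
  polyCompA_eq_weightedHomogeneousSubmodule (p := p) ▸ weightedGradedAlgebra ℂ _

lemma X_mem_polyCompA (o : ι ⊕ Fin 2) :
    X o ∈ polyCompA p (Sum.elim (egen p) (fun _ => cgen p) o) := by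
  rw [polyCompA_eq_weightedHomogeneousSubmodule]
  exact isWeightedHomogeneous_X ℂ _ o

lemma isHomogeneous_SIdl : (SIdl ι p c0 c1).IsHomogeneous (polyCompA p) := by
  refine Ideal.homogeneous_span _ _ ?_
  rintro _ ⟨i, rfl⟩
  refine ⟨cgen p, sub_mem ?_ (add_mem ?_ ?_)⟩
  · exact LGroup.nsmul_egen p i ▸ SetLike.pow_mem_graded (p i) (X_mem_polyCompA (.inl i))
  all_goals
    rw [← smul_eq_C_mul]
    exact Submodule.smul_mem _ _ (X_mem_polyCompA (.inr _))

instance : GradedAlgebra (SCompA p c0 c1) :=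
  gradedAlgebraQuotient (polyCompA p) isHomogeneous_SIdl

end SAlg

/-! ### The algebra `S` -/

namespace SAlg

variable {ι : Type} {p : ι → ℕ} {c0 c1 : ι → ℂ}

/-- The generator `x_i` of `S`. -/
def x (i : ι) : SAlg ι p c0 c1 := Ideal.Quotient.mkₐ ℂ _ (X (.inl i))

/-- The generators `t_0`, `t_1` of `S`. -/
def t (i : Fin 2) : SAlg ι p c0 c1 := Ideal.Quotient.mkₐ ℂ _ (X (.inr i))

lemma mk_X_inl (i : ι) : Ideal.Quotient.mkₐ ℂ (SIdl ι p c0 c1) (X (.inl i)) = x i := rfl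

lemma mk_X_inr (i : Fin 2) : Ideal.Quotient.mkₐ ℂ (SIdl ι p c0 c1) (X (.inr i)) = t i := rfl

/-- The inclusion of `ℂ[t_0, t_1]` in `S`. -/
def base : MvPolynomial (Fin 2) ℂ →ₐ[ℂ] SAlg ι p c0 c1 := aeval t

lemma base_C (a : ℂ) : base (C a) = Ideal.Quotient.mkₐ ℂ (SIdl ι p c0 c1) (C a) :=
  (base.commutes a).trans ((Ideal.Quotient.mkₐ ℂ (SIdl ι p c0 c1)).commutes a).symm

lemma base_X (i : Fin 2) : base (X i) = (t i : SAlg ι p c0 c1) := aeval_X _ _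

lemma x_pow (i : ι) : (x i ^ p i : SAlg ι p c0 c1) = base (linearForm (c0 i) (c1 i)) := by
  rw [linearForm, map_add, map_mul, map_mul, base_C, base_C, base_X, base_X, ← mk_X_inl,
    ← mk_X_inr, ← mk_X_inr, ← map_pow, ← map_mul, ← map_mul, ← map_add, ← sub_eq_zero, ← map_sub]
  exact Ideal.Quotient.eq_zero_iff_mem.2 (Ideal.subset_span ⟨i, rfl⟩)

lemma map_base (ε : SAlg ι p c0 c1 →ₐ[ℂ] ℂ) (F : MvPolynomial (Fin 2) ℂ) :
    ε (base F) = eval (fun i => ε (t i)) F := by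
  rw [base, comp_aeval_apply, aeval_eq_eval]

lemma map_x_pow (ε : SAlg ι p c0 c1 →ₐ[ℂ] ℂ) (i : ι) :
    ε (x i) ^ p i = c0 i * ε (t 0) + c1 i * ε (t 1) := by
  rw [← map_pow, x_pow, map_base, eval_linearForm]

lemma map_x_eq_zero_iff (hp : ∀ i, 0 < p i) (ε : SAlg ι p c0 c1 →ₐ[ℂ] ℂ) (i : ι) :
    ε (x i) = 0 ↔ c0 i * ε (t 0) + c1 i * ε (t 1) = 0 := by
  rw [← map_x_pow, pow_eq_zero_iff (hp i).ne']

lemma map_x_eq_zero_iff_eq {j : ι} {ε : SAlg ι p c0 c1 →ₐ[ℂ] ℂ} (hp : ∀ i, 0 < p i)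
    (hc : ∀ i ≠ j, c0 i * c1 j ≠ c1 i * c0 j) (hε : ∀ i, ε (t i) = ![c1 j, -c0 j] i)
    (i : ι) : ε (x i) = 0 ↔ i = j := by
  rw [map_x_eq_zero_iff hp, hε, hε]
  obtain rfl | hij := eq_or_ne i j
  · simp [mul_comm]
  · simpa [hij, ← sub_eq_add_neg, sub_eq_zero] using hc i hij

lemma exists_algHom_t_eq (hp : ∀ i, 0 < p i) (q : Fin 2 → ℂ) :
    ∃ ε : SAlg ι p c0 c1 →ₐ[ℂ] ℂ, ∀ i, ε (t i) = q i := by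
  choose ρ hρ using fun i => IsAlgClosed.exists_pow_nat_eq (c0 i * q 0 + c1 i * q 1) (hp i)
  refine ⟨Ideal.Quotient.liftₐ (SIdl ι p c0 c1) (aeval (Sum.elim ρ q)) fun f hf => ?_,
    fun i => ?_⟩
  · refine (Ideal.span_le (I := RingHom.ker _)).2 ?_ hf
    rintro _ ⟨i, rfl⟩
    simp [RingHom.mem_ker, hρ]
  · exact (aeval_X _ _).trans rfl

section Fintype

variable [Fintype ι]

lemma eq_zero_of_prod_x_pow_mul_base_eq_zero (hp : ∀ i, 0 < p i)
    (hc : ∀ i, c0 i ≠ 0 ∨ c1 i ≠ 0) {b : ι → ℕ} {F : MvPolynomial (Fin 2) ℂ}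
    (h : ((∏ i, x i ^ b i) * base F : SAlg ι p c0 c1) = 0) : F = 0 := by
  have hprod : (∏ i, linearForm (c0 i) (c1 i)) * F = 0 := by
    refine MvPolynomial.funext fun q => ?_
    obtain ⟨ε, hε⟩ := exists_algHom_t_eq (c0 := c0) (c1 := c1) hp q
    have hεF := congrArg ε h
    rw [map_mul, map_prod, map_base, map_zero, mul_eq_zero, Finset.prod_eq_zero_iff,
      _root_.funext hε] at hεF
    rw [map_mul, map_prod, map_zero, mul_eq_zero, Finset.prod_eq_zero_iff]
    refine hεF.imp_left fun ⟨i, hi, hi0⟩ => ⟨i, hi, ?_⟩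
    rw [map_pow] at hi0
    rw [eval_linearForm, ← hε, ← hε, ← map_x_eq_zero_iff hp, eq_zero_of_pow_eq_zero hi0]
  exact (mul_eq_zero.1 hprod).resolve_left
    (Finset.prod_ne_zero_iff.2 fun i _ => linearForm_ne_zero (hc i))

lemma mk_monomial (m : ι ⊕ Fin 2 →₀ ℕ) (a : ℂ) :
    Ideal.Quotient.mkₐ ℂ (SIdl ι p c0 c1) (monomial m a) = (∏ i, x i ^ (m (.inl i) % p i)) *
      base (C a * (∏ i, linearForm (c0 i) (c1 i) ^ (m (.inl i) / p i)) *
        ∏ i, X i ^ m (.inr i)) := by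
  rw [monomial_eq, Finsupp.prod_fintype _ _ fun _ => pow_zero _, Fintype.prod_sum_type]
  simp only [map_mul, map_prod, map_pow, ← x_pow]
  have hx (i : ι) : (x i : SAlg ι p c0 c1) ^ m (.inl i) =
      x i ^ (m (.inl i) % p i) * (x i ^ p i) ^ (m (.inl i) / p i) := by
    rw [← pow_mul, ← pow_add, Nat.mod_add_div]
  simp only [mk_X_inl, mk_X_inr, base_C, base_X]
  rw [Finset.prod_congr rfl fun i _ => hx i, Finset.prod_mul_distrib]
  ring

variable [DecidableEq ι]

lemma x_mem (i : ι) : (x i : SAlg ι p c0 c1) ∈ SCompA p c0 c1 (egen p i) :=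
  ⟨_, X_mem_polyCompA _, rfl⟩

lemma t_mem (i : Fin 2) : (t i : SAlg ι p c0 c1) ∈ SCompA p c0 c1 (cgen p) :=
  ⟨_, X_mem_polyCompA _, rfl⟩

lemma mem_Lplus_of_mem (j : ι) {y : LGroup ι p} {s : SAlg ι p c0 c1} (hs : s ∈ SCompA p c0 c1 y)
    (h0 : s ≠ 0) : y ∈ Lplus p := by
  obtain ⟨f, hf, rfl⟩ := hs
  obtain ⟨m, hm⟩ := MvPolynomial.ne_zero_iff.1 (ne_zero_of_map h0)
  rw [← hf m hm]
  exact add_mem (sum_mem fun i _ => nsmul_mem (LGroup.egen_mem_Lplus p i) _)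
    (nsmul_mem (LGroup.cgen_mem_Lplus j) _)

theorem exists_eq_prod_x_pow_mul_base (hp : ∀ i, 0 < p i) {b : ι → ℕ} (hb : ∀ i, b i < p i)
    {d : ℕ} {s : SAlg ι p c0 c1}
    (hs : s ∈ SCompA p c0 c1 (∑ i, b i • egen p i + d • cgen p)) :
    ∃ F : MvPolynomial (Fin 2) ℂ, F.IsHomogeneous d ∧ s = (∏ i, x i ^ b i) * base F := by
  obtain ⟨f, hf, rfl⟩ := hs
  suffices h : Ideal.Quotient.mkₐ ℂ (SIdl ι p c0 c1) f ∈ (homogeneousSubmodule (Fin 2) ℂ d).map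
      (LinearMap.mulLeft ℂ (∏ i, x i ^ b i) ∘ₗ base.toLinearMap) by
    obtain ⟨F, hF, hFf⟩ := h
    exact ⟨F, hF, hFf.symm⟩
  rw [f.as_sum, map_sum]
  refine sum_mem fun m hm => ?_
  have hwt := hf m (mem_support_iff.1 hm)
  rw [wtA, LGroup.sum_nsmul_egen_eq, add_assoc, ← add_nsmul] at hwt
  have hmod (i : ι) : m (.inl i) % p i = b i := by
    have := congrArg (LGroup.residue p i) hwt
    simp only [map_add, map_nsmul, LGroup.residue_sum_nsmul_egen, LGroup.residue_cgen,
      smul_zero, add_zero, ZMod.natCast_eq_natCast_iff', Nat.mod_mod] at this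
    rw [this, Nat.mod_eq_of_lt (hb i)]
  simp only [hmod, add_right_inj] at hwt
  have hd := LGroup.nsmul_cgen_injective hp hwt
  rw [mk_monomial]
  simp only [hmod]
  refine ⟨_, ?_, rfl⟩
  rw [← hd, ← Fin.sum_univ_two fun i => m (.inr i)]
  refine ((IsHomogeneous.prod _ _ _ fun i _ => ?_).C_mul _).mul
    (IsHomogeneous.prod _ _ _ fun i _ => isHomogeneous_X_pow i _)
  simpa using (isHomogeneous_linearForm (a := c0 i) (b := c1 i)).pow (m (.inl i) / p i)

end Fintype

lemma x_mem_nonZeroDivisors [Finite ι] (hp : ∀ i, 0 < p i) (hc : ∀ i, c0 i ≠ 0 ∨ c1 i ≠ 0) (j : ι) :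
    (x j : SAlg ι p c0 c1) ∈ nonZeroDivisors _ := by
  classical
  cases nonempty_fintype ι
  refine mem_nonZeroDivisors_of_mem (x_mem j) fun y s hs h => ?_
  by_contra hs0
  obtain ⟨b, d, hb, rfl⟩ := LGroup.exists_eq_sum_add_nsmul_cgen hp (mem_Lplus_of_mem j hs hs0)
  obtain ⟨F, -, rfl⟩ := exists_eq_prod_x_pow_mul_base hp hb hs
  have hF : (∏ i, x i ^ b i) * base (linearForm (c0 j) (c1 j) * F) = (0 : SAlg ι p c0 c1) := calc
    _ = x j ^ (p j - 1) * (x j * ((∏ i, x i ^ b i) * base F)) := by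
      rw [map_mul, ← x_pow, ← mul_assoc (x j ^ _), pow_sub_one_mul (hp j).ne']
      ring
    _ = 0 := by rw [h, mul_zero]
  have := eq_zero_of_prod_x_pow_mul_base_eq_zero hp hc hF
  rw [mul_eq_zero, or_iff_right (linearForm_ne_zero (hc j))] at this
  exact hs0 (by rw [this, map_zero, mul_zero])

section Point

variable [Fintype ι] [DecidableEq ι] {j : ι} {ε : SAlg ι p c0 c1 →ₐ[ℂ] ℂ}

lemma isHomogeneousParameter_x (hp : ∀ i, 0 < p i) (hcj : c0 j ≠ 0 ∨ c1 j ≠ 0)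
    (hc : ∀ i ≠ j, c0 i * c1 j ≠ c1 i * c0 j) (hε : ∀ i, ε (t i) = ![c1 j, -c0 j] i) :
    IsHomogeneousParameter (SCompA p c0 c1) (egen p j) (x j) ε where
  mem := x_mem j
  mem_nonZeroDivisors := x_mem_nonZeroDivisors hp (fun i => by
    obtain rfl | hij := eq_or_ne i j
    · exact hcj
    · by_contra! h
      exact hc i hij (by rw [h.1, h.2, zero_mul, zero_mul])) j
  map_eq_zero := (map_x_eq_zero_iff_eq hp hc hε j).2 rfl
  dvd {y s} hs h0 := by
    obtain rfl | hs0 := eq_or_ne s 0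
    · exact dvd_zero _
    obtain ⟨b, d, hb, rfl⟩ := LGroup.exists_eq_sum_add_nsmul_cgen hp (mem_Lplus_of_mem j hs hs0)
    obtain ⟨F, hF, rfl⟩ := exists_eq_prod_x_pow_mul_base hp hb hs
    rw [map_mul, map_prod, map_base, mul_eq_zero, Finset.prod_eq_zero_iff, _root_.funext hε] at h0
    obtain ⟨i, hi, hi0⟩ | hF0 := h0
    · rw [map_pow, pow_eq_zero_iff', map_x_eq_zero_iff_eq hp hc hε] at hi0
      obtain ⟨rfl, hbi⟩ := hi0
      refine ((dvd_pow_self _ hbi).trans ?_).mul_right _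
      exact Finset.dvd_prod_of_mem (fun i => x i ^ b i) hi
    · have hab : IsCoprime (c0 j) (c1 j) := hcj.elim
        (fun h => ⟨(c0 j)⁻¹, 0, by simp [h]⟩) fun h => ⟨0, (c1 j)⁻¹, by simp [h]⟩
      refine Dvd.dvd.mul_left ?_ _
      calc x j ∣ x j ^ p j := dvd_pow_self _ (hp j).ne'
        _ = base (linearForm (c0 j) (c1 j)) := x_pow j
        _ ∣ base F := map_dvd base (linearForm_dvd_of_eval_eq_zero hab hF hF0)

lemma mem_unitDegrees_iff (hp : ∀ i, 0 < p i) (hcj : c0 j ≠ 0 ∨ c1 j ≠ 0)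
    (hc : ∀ i ≠ j, c0 i * c1 j ≠ c1 i * c0 j) (hε : ∀ i, ε (t i) = ![c1 j, -c0 j] i)
    {y : LGroup ι p} :
    y ∈ unitDegrees (SCompA p c0 c1) ε ↔ y ∈ Lplus p ∧ LGroup.residue p j y = 0 := by
  have hx := map_x_eq_zero_iff_eq hp hc hε
  constructor
  · rintro ⟨s, hs, hs0⟩
    have hy := mem_Lplus_of_mem j hs (ne_zero_of_map hs0)
    refine ⟨hy, ?_⟩
    obtain ⟨b, d, hb, rfl⟩ := LGroup.exists_eq_sum_add_nsmul_cgen hp hy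
    obtain ⟨F, -, rfl⟩ := exists_eq_prod_x_pow_mul_base hp hb hs
    rw [map_mul, map_prod] at hs0
    have hbj := Finset.prod_ne_zero_iff.1 (left_ne_zero_of_mul hs0) j (Finset.mem_univ j)
    rw [map_pow, (hx j).2 rfl, ne_eq, zero_pow_eq_zero, not_not] at hbj
    rw [map_add, LGroup.residue_sum_nsmul_egen, hbj, map_nsmul, LGroup.residue_cgen, smul_zero,
      Nat.cast_zero, add_zero]
  · rintro ⟨hy, hr⟩
    obtain ⟨m, rfl⟩ := LGroup.mem_Lplus_iff.1 hy
    rw [LGroup.residue_sum_nsmul_egen, ZMod.natCast_eq_zero_iff] at hr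
    have hcgen : cgen p ∈ unitDegrees (SCompA p c0 c1) ε := by
      obtain h | h := hcj
      · exact ⟨t 1, t_mem 1, by simpa [hε] using h⟩
      · exact ⟨t 0, t_mem 0, by simpa [hε] using h⟩
    refine sum_mem fun i _ => ?_
    obtain rfl | hij := eq_or_ne i j
    · obtain ⟨k, hk⟩ := hr
      rw [hk, mul_comm, mul_nsmul', LGroup.nsmul_egen]
      exact nsmul_mem hcgen k
    · have hegen : egen p i ∈ unitDegrees (SCompA p c0 c1) ε := ⟨x i, x_mem i, (hx i).not.2 hij⟩
      exact nsmul_mem hegen _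

end Point

end SAlg

namespace SAlg

variable {ι : Type} [Fintype ι] [DecidableEq ι] {p : ι → ℕ} {c0 c1 : ι → ℂ} {j : ι}
  {ε : SAlg ι p c0 c1 →ₐ[ℂ] ℂ} {x : LGroup ι p}

theorem isOfCyclicType (hp : ∀ i, 0 < p i) (hcj : c0 j ≠ 0 ∨ c1 j ≠ 0)
    (hc : ∀ i ≠ j, c0 i * c1 j ≠ c1 i * c0 j) (hε : ∀ i, ε (t i) = ![c1 j, -c0 j] i)
    (hx : x ∈ Lplus p) (hcx : cgen p - x ∉ Lplus p) {q : ℤ} (hq : LGroup.residue p j x = -q) :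
    IsOfCyclicType (SCompA p c0 c1) ε x (egen p j) (p j) q := by
  have hunit {l v : ℤ} : l • x + v • egen p j ∈ unitDegrees (SCompA p c0 c1) ε ↔
      l • x + v • egen p j ∈ Lplus p ∧ (p j : ℤ) ∣ v - l * q := by
    rw [mem_unitDegrees_iff hp hcj hc hε, LGroup.residue_zsmul_add_zsmul_eq_zero_iff hq]
  exact {
    dvd_of_mem := fun h => (hunit.1 h).2
    mem_unitDegrees := fun hl hv h => hunit.2 ⟨LGroup.zsmul_add_zsmul_mem_Lplus hx hl hv <|
      (LGroup.residue_zsmul_add_zsmul_eq_zero_iff hq).2 h, h⟩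
    exists_forall_mem_unitDegrees := fun v => by
      obtain ⟨l₀, hl₀⟩ := LGroup.exists_forall_zsmul_add_zsmul_mem_Lplus hp hx hcx j v
      exact ⟨l₀, fun l hl h => hunit.2 ⟨hl₀ l hl, h⟩⟩
    eq_bot := fun hl hv => (Submodule.eq_bot_iff _).2 fun s hs => by
      by_contra hs0
      exact LGroup.zsmul_add_zsmul_notMem_Lplus hx hcx hl hv (mem_Lplus_of_mem j hs hs0)
    exists_smul_eq := LGroup.exists_zsmul_eq_zsmul_egen hp hx hcx j }

end SAlg

open CategoryTheory in
theorem special_rank_one_iff_iSeries_general {ι : Type} [Fintype ι] [DecidableEq ι] {p : ι → ℕ}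
    (hp : ∀ i, 0 < p i) {c0 c1 : ι → ℂ} {j : ι} (hpj : 1 < p j) (hcj : c0 j ≠ 0 ∨ c1 j ≠ 0)
    (hc : ∀ i ≠ j, c0 i * c1 j ≠ c1 i * c0 j) {x : LGroup ι p} (hx : x ∈ Lplus p)
    (hcx : cgen p - x ∉ Lplus p) {a : ℕ} (ha : a < p j) (hxa : LGroup.residue p j x = a)
    (hpa : (p j).Coprime a) {R : Subalgebra ℂ (SAlg ι p c0 c1)}
    (hR : Subalgebra.toSubmodule R = SVerA p c0 c1 x) {u : ℕ} (hu : u ≤ p j)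
    {M : Submodule R (SAlg ι p c0 c1)}
    (hM : (M : Set (SAlg ι p c0 c1)) = SShiftA p c0 c1 (u • egen p j) x) :
    Subsingleton (((Ext R (ModuleCat R) 1).obj (Opposite.op (ModuleCat.of R M))).obj
      (ModuleCat.of R R)) ↔ u ∈ ISet (p j) (p j - a) := by
  obtain ⟨ε, hε⟩ := SAlg.exists_algHom_t_eq (c0 := c0) (c1 := c1) hp ![c1 j, -c0 j]
  have ha0 : a ≠ 0 := by
    rintro rfl
    exact hpj.ne' ((p j).coprime_zero_right.1 hpa)
  have hq : LGroup.residue p j x = -((p j - a : ℕ) : ℤ) := by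
    rw [hxa, Nat.cast_sub ha.le]
    simp
  have hpq : IsCoprime (p j : ℤ) ((p j - a : ℕ) : ℤ) :=
    Nat.isCoprime_iff_coprime.2 ((Nat.coprime_self_sub_right ha.le).2 hpa)
  rw [mem_ISet_iff_not_isObstructed (Nat.sub_lt (hp j) (Nat.pos_of_ne_zero ha0)) hu]
  refine (SAlg.isOfCyclicType hp hcj hc hε hx hcx hq).subsingleton_ext_one_iff_not_isObstructed
    (SAlg.isHomogeneousParameter_x hp hcj hc hε) (by exact_mod_cast hp j) hpq
    (by exact_mod_cast hu) ?_ hM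
  rw [hR, SVerA, cosetPart]
  simp only [zero_add]

open CategoryTheory in
/-- The rank one special CM modules over `R = S^x`:
for `0 ≤ u ≤ p_j`, `Ext¹_R(S(u e_j)^x, R) = 0` iff `u ∈ I(p_j, p_j − a_j)`. -/
theorem special_rank_one_iff_iSeries (n : ℕ) (hn : 1 ≤ n) (p : Fin n → ℕ)
    (hp : ∀ i, 2 ≤ p i)
    (c0 c1 : Fin n → ℂ) (hnz : ∀ i, (c0 i, c1 i) ≠ (0, 0))
    (hdist : ∀ i j : Fin n, i ≠ j → c0 i * c1 j ≠ c1 i * c0 j)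
    (x : LGroup (Fin n) p) (hxp : x ∈ Lplus p)
    (hxint : ¬ (x ∈ Lplus p ∧ cgen p - x ∈ Lplus p))
    (a : Fin n → ℕ) (ha : ∀ i, a i < p i) (aZ : ℤ)
    (hxnf : x = (∑ i, a i • egen p i) + aZ • cgen p)
    (hgcd : ∀ i, Nat.gcd (p i) (a i) = 1)
    (R : Subalgebra ℂ (SAlg (Fin n) p c0 c1))
    (hR : Subalgebra.toSubmodule R = SVerA p c0 c1 x) :
    ∀ (j : Fin n) (u : ℕ), u ≤ p j →
      ∀ (M : Submodule ↥R (SAlg (Fin n) p c0 c1)),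
        (M : Set (SAlg (Fin n) p c0 c1)) = ↑(SShiftA p c0 c1 (u • egen p j) x) →
        (Subsingleton (((Ext ↥R (ModuleCat ↥R) 1).obj
            (Opposite.op (ModuleCat.of ↥R ↥M))).obj (ModuleCat.of ↥R ↥R)) ↔
          u ∈ ISet (p j) (p j - a j)) := by
  exact fun j _ hu _ hM => special_rank_one_iff_iSeries_general
    (fun i => two_pos.trans_le (hp i)) (hp j) (by simpa [or_iff_not_imp_left] using hnz j)
    (fun i hij => hdist i j hij) hxp (fun h => hxint ⟨hxp, h⟩) (ha j)
    (hxnf ▸ LGroup.residue_sum_nsmul_egen_add_zsmul_cgen a aZ) (hgcd j) hR hu hM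
end
end

section
/- (1) The Veronese subring S^s equals the ℂ-subalgebra of S generated by the elements 𝗏 and 𝗎_1,…,𝗎_n. (2) The quotient ℂ-vector space S^s/𝗏S^s is spanned by the images of the powers 𝗎_i^ℓ for 1 ≤ i ≤ n and ℓ ≥ 0. -/
set_option synthInstance.maxHeartbeats 1000000
set_option maxHeartbeats 1000000

noncomputable section

open MvPolynomial

abbrev BPoly (n : ℕ) : Type := MvPolynomial (Fin n) ℂ

/-- The defining ideal `(xᵢ^{pᵢ} + x₁^{p₁} − λᵢx₂^{p₂} : 3 ≤ i ≤ n)` (0-indexed). -/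
def BIdl (n : ℕ) [NeZero n] (p : Fin n → ℕ) (lam : Fin n → ℂ) : Ideal (BPoly n) :=
  Ideal.span { f | ∃ i : Fin n, 2 ≤ (i : ℕ) ∧
    f = X i ^ p i + X 0 ^ p 0 - C (lam i) * X 1 ^ p 1 }

abbrev BAlg (n : ℕ) [NeZero n] (p : Fin n → ℕ) (lam : Fin n → ℂ) : Type :=
  BPoly n ⧸ BIdl n p lam

/-- The `L`-weight of an exponent vector, `deg xᵢ := eᵢ`. -/
def wtB {n : ℕ} (p : Fin n → ℕ) (m : Fin n →₀ ℕ) : LGroup (Fin n) p :=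
  ∑ i : Fin n, m i • egen p i

def polyCompB {n : ℕ} (p : Fin n → ℕ) (y : LGroup (Fin n) p) :
    Submodule ℂ (BPoly n) where
  carrier := { f | ∀ m, coeff m f ≠ 0 → wtB p m = y }
  add_mem' := by
    intro f g hf hg m hm
    by_cases h : coeff m f = 0
    · refine hg m fun h' => hm ?_
      simp [coeff_add, h, h']
    · exact hf m h
  zero_mem' := by
    intro m hm
    simp at hm
  smul_mem' := by
    intro c f hf m hm
    refine hf m fun h => hm ?_
    simp [coeff_smul, h]

/-- The homogeneous component `S_y ⊆ S` of the `L`-graded algebra `S`. -/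
def SCompB (n : ℕ) [NeZero n] (p : Fin n → ℕ) (lam : Fin n → ℂ) (y : LGroup (Fin n) p) :
    Submodule ℂ (BAlg n p lam) :=
  (polyCompB p y).map (Ideal.Quotient.mkₐ ℂ (BIdl n p lam)).toLinearMap

/-- The Veronese subring `S^x = ⊕_{k ∈ ℤ} S_{kx}`, as a subspace of `S`. -/
def SVerB (n : ℕ) [NeZero n] (p : Fin n → ℕ) (lam : Fin n → ℂ) (x : LGroup (Fin n) p) :
    Submodule ℂ (BAlg n p lam) :=
  ⨆ k : ℤ, SCompB n p lam (k • x)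

/-- `S(y)^x = ⊕_{k ∈ ℤ} S_{y + kx}`, as a subspace of `S`. -/
def SShiftB (n : ℕ) [NeZero n] (p : Fin n → ℕ) (lam : Fin n → ℂ)
    (y x : LGroup (Fin n) p) : Submodule ℂ (BAlg n p lam) :=
  ⨆ k : ℤ, SCompB n p lam (y + k • x)

/-- The polynomials `𝗎₁, …, 𝗎ₙ` (0-indexed). -/
def uPoly (n : ℕ) [NeZero n] (p : Fin n → ℕ) (i : Fin n) : BPoly n :=
  if (i : ℕ) = 0 then
    X 0 ^ (p 0 + p 1) * ∏ j ∈ Finset.univ.filter (fun j : Fin n => 2 ≤ (j : ℕ)), X j ^ p 1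
  else if (i : ℕ) = 1 then
    X 1 ^ (p 0 + p 1) * ∏ j ∈ Finset.univ.filter (fun j : Fin n => 2 ≤ (j : ℕ)), X j ^ p 0
  else
    -(X 0 ^ p i * X 1 ^ (p 1 + p i) *
      ∏ j ∈ Finset.univ.filter (fun j : Fin n => 2 ≤ (j : ℕ) ∧ j ≠ i), X j ^ p i)

/-- The elements `𝗎ᵢ ∈ S`. -/
def uElem (n : ℕ) [NeZero n] (p : Fin n → ℕ) (lam : Fin n → ℂ) (i : Fin n) :
    BAlg n p lam :=
  Ideal.Quotient.mk (BIdl n p lam) (uPoly n p i)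

/-- The element `𝗏 = x₁x₂⋯xₙ ∈ S`. -/
def vElem (n : ℕ) [NeZero n] (p : Fin n → ℕ) (lam : Fin n → ℂ) : BAlg n p lam :=
  Ideal.Quotient.mk (BIdl n p lam) (∏ i : Fin n, X i)

/-!
Since `pᵢ eᵢ = c` for all `i`, the exponent vectors of degree `k s` are `m = k + p b` with `b` an
integer vector of sum zero. If no `mᵢ` vanishes, the monomial is divisible by `𝗏`. Otherwise
`mⱼ = 0` for some `j`, which forces `k = pⱼ l` and `bⱼ = -l`. Any two of the powers `xᵢ ^ pᵢ` span
the same pencil, so a factor `xᵢ ^ pᵢ` may be traded for a combination of `xᵢ' ^ pᵢ'` and `xⱼ ^ pⱼ`.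
The second term has one zero exponent fewer, while the first moves `b` closer to `l (eₜ - eⱼ)`,
which is the vector of the `l`-th power of the generator not involving `xⱼ`.
-/

section Exchange

variable {ι : Type*} [Fintype ι] [DecidableEq ι]

lemma sum_natAbs_exchange_lt {b c : ι → ℤ} {i i' : ι} (hi : c i < b i) (hi' : b i' < c i') :
    ∑ r, ((b - Pi.single i 1 + Pi.single i' 1 : ι → ℤ) r - c r).natAbs <
      ∑ r, (b r - c r).natAbs := by
  have hne : i ≠ i' := by rintro rfl; omega
  refine Finset.sum_lt_sum (fun r _ => ?_) ⟨i, Finset.mem_univ i, ?_⟩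
  · simp only [Pi.add_apply, Pi.sub_apply, Pi.single_apply]
    split_ifs with h h' h' <;> subst_vars <;> omega
  · simp only [Pi.add_apply, Pi.sub_apply, Pi.single_eq_same, Pi.single_eq_of_ne hne]
    omega

lemma exchange_induction {c : ι → ℤ} {P : (ι → ℤ) → Prop} (base : P c)
    (step : ∀ b i i', c i < b i → b i' < c i' → P (b - Pi.single i 1 + Pi.single i' 1) → P b)
    (b : ι → ℤ) (hb : ∑ i, b i = ∑ i, c i) : P b := by
  induction hD : ∑ r, (b r - c r).natAbs using Nat.strong_induction_on generalizing b with
  | _ D ih =>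
  by_cases hbc : b = c
  · rwa [hbc]
  obtain ⟨i, hi⟩ : ∃ i, c i < b i := by
    by_contra! h
    exact hbc (funext fun r =>
      (Finset.sum_eq_sum_iff_of_le fun i _ => h i).mp hb r (Finset.mem_univ r))
  obtain ⟨i', hi'⟩ : ∃ i', b i' < c i' := by
    by_contra! h
    exact hbc (funext fun r =>
      ((Finset.sum_eq_sum_iff_of_le fun i _ => h i).mp hb.symm r (Finset.mem_univ r)).symm)
  refine step b i i' hi hi' (ih _ (hD ▸ sum_natAbs_exchange_lt hi hi') _ ?_ rfl)
  simp [Finset.sum_add_distrib, hb]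

end Exchange

section Weight

variable {ι : Type*} {p : ι → ℕ} {k k' : ℤ} {b b' : ι → ℤ} {m m' : ι → ℕ}

/-- The exponent vector `m` is presented as `k (1, …, 1) + p b`; its degree in `L` is then
`k s + (∑ b) c`. -/
def HasTwist (p : ι → ℕ) (k : ℤ) (b : ι → ℤ) (m : ι → ℕ) : Prop :=
  ∀ i, (m i : ℤ) = k + p i * b i

/-- The exponent vector `m` has degree `k s` in `L`, see `wtB_eq_zsmul_iff`. -/
def HasWeight [Fintype ι] (p : ι → ℕ) (k : ℤ) (m : ι → ℕ) : Prop :=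
  ∃ b : ι → ℤ, ∑ i, b i = 0 ∧ HasTwist p k b m

/-- The exponent vector of the generator of degree `pⱼ` which does not involve `xⱼ` and in which
the exponent of `xₜ` is raised by `pₜ`. -/
def avoidingExponent [DecidableEq ι] (p : ι → ℕ) (j t : ι) : ι → ℕ :=
  fun i => if i = j then 0 else if i = t then p i + p j else p j

namespace HasTwist

lemma eq_of_same_twist (h : HasTwist p k b m) (h' : HasTwist p k b m') : m = m' :=
  funext fun i => by exact_mod_cast (h i).trans (h' i).symm

lemma add (h : HasTwist p k b m) (h' : HasTwist p k' b' m') :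
    HasTwist p (k + k') (b + b') (m + m') := fun i => by
  simp only [Pi.add_apply, Nat.cast_add, h i, h' i]
  ring

lemma nsmul (h : HasTwist p k b m) (l : ℕ) : HasTwist p (l * k) (l • b) (l • m) := fun i => by
  simp only [Pi.smul_apply, nsmul_eq_mul, Nat.cast_mul, Nat.cast_id, h i]
  ring

lemma twist_nonneg_of_nonpos (h : HasTwist p k b m) (hp : ∀ i, 0 < p i) (hk : k ≤ 0) (i : ι) :
    0 ≤ b i := by
  have hmul : (0 : ℤ) ≤ p i * b i := by have := h i; omega
  exact nonneg_of_mul_nonneg_right hmul (by exact_mod_cast hp i)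

lemma twist_apply_eq (h : HasTwist p k b m) (h' : HasTwist p k b' m') {j : ι} (hj : 0 < p j)
    (hm : m j = m' j) : b j = b' j := by
  have hmul : (p j : ℤ) * b j = p j * b' j := by
    linear_combination h' j - h j + congrArg (Nat.cast : ℕ → ℤ) hm
  exact mul_left_cancel₀ (by exact_mod_cast hj.ne') hmul

lemma exists_eq_natCast_mul (h : HasTwist p k b m) {j : ι} (hj : 0 < p j) (hk : 0 ≤ k)
    (hm : m j = 0) : ∃ l : ℕ, k = l * p j := by
  have hkb : k = -b j * p j := by
    have := h j
    rw [hm, Nat.cast_zero] at this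
    linarith
  have hb : 0 ≤ -b j := nonneg_of_mul_nonneg_left (hkb ▸ hk) (by exact_mod_cast hj)
  exact ⟨(-b j).toNat, by rw [Int.toNat_of_nonneg hb, ← hkb]⟩

lemma exists_exchange [DecidableEq ι] (h : HasTwist p k b m) (hk : 0 < k) {i : ι}
    (hi : 0 < b i) :
    ∃ m₀ : ι → ℕ, m = m₀ + Pi.single i (p i) ∧ (∀ r, m₀ r = 0 → m r = 0) ∧
      ∀ q, HasTwist p k (b - Pi.single i 1 + Pi.single q 1) (m₀ + Pi.single q (p q)) := by
  have hmi : p i < m i := by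
    have := h i
    have : (p i : ℤ) ≤ p i * b i := le_mul_of_one_le_right (by positivity) hi
    omega
  have hm : m = m - Pi.single i (p i) + Pi.single i (p i) := by
    funext r
    rcases eq_or_ne r i with rfl | hr
    · simp [hmi.le]
    · simp [hr]
  refine ⟨m - Pi.single i (p i), hm, fun r hr => ?_, fun q r => ?_⟩
  · rcases eq_or_ne r i with rfl | hri
    · simp only [Pi.sub_apply, Pi.single_eq_same] at hr
      omega
    · simpa [hri] using hr
  · have hsingle : ∀ a : ι,
        ((Pi.single a (p a) : ι → ℕ) r : ℤ) = p r * (Pi.single a 1 : ι → ℤ) r := by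
      intro a
      rcases eq_or_ne r a with rfl | hr
      · simp
      · simp [hr]
    have hmr : (m r : ℤ) = ((m - Pi.single i (p i) : ι → ℕ) r : ℤ) +
        (Pi.single i (p i) : ι → ℕ) r := by
      exact_mod_cast congrFun hm r
    simp only [Pi.add_apply, Nat.cast_add, Pi.sub_apply b, hsingle] at hmr ⊢
    linear_combination h r - hmr

end HasTwist

lemma hasTwist_avoidingExponent [DecidableEq ι] {j t : ι} (h : t ≠ j) :
    HasTwist p (p j) (Pi.single t 1 - Pi.single j 1) (avoidingExponent p j t) := fun i => by
  rcases eq_or_ne i j with rfl | hij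
  · simp [avoidingExponent, h.symm]
  rcases eq_or_ne i t with rfl | hit
  · simp [avoidingExponent, hij, add_comm]
  · simp [avoidingExponent, hij, hit]

variable [Fintype ι]

lemma HasTwist.twist_eq_zero_of_nonpos (h : HasTwist p k b m) (hp : ∀ i, 0 < p i) (hk : k ≤ 0)
    (hb : ∑ i, b i = 0) : b = 0 :=
  funext fun i => (Finset.sum_eq_zero_iff_of_nonneg fun i _ =>
    h.twist_nonneg_of_nonpos hp hk i).mp hb i (Finset.mem_univ i)

lemma hasWeight_avoidingExponent [DecidableEq ι] {j t : ι} (h : t ≠ j) :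
    HasWeight p (p j) (avoidingExponent p j t) :=
  ⟨_, by simp, hasTwist_avoidingExponent h⟩

lemma hasWeight_zero : HasWeight p 0 0 := ⟨0, by simp, fun i => by simp⟩

lemma hasWeight_one : HasWeight p 1 1 := ⟨0, by simp, fun i => by simp⟩

namespace HasWeight

lemma add (h : HasWeight p k m) (h' : HasWeight p k' m') : HasWeight p (k + k') (m + m') := by
  obtain ⟨b, hb, hm⟩ := h
  obtain ⟨b', hb', hm'⟩ := h'
  exact ⟨b + b', by simp [Finset.sum_add_distrib, hb, hb'], hm.add hm'⟩

lemma of_one_add (h : HasWeight p k (1 + m)) : HasWeight p (k - 1) m := by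
  obtain ⟨b, hb, hm⟩ := h
  refine ⟨b, hb, fun i => ?_⟩
  have := hm i
  simp only [Pi.add_apply, Pi.one_apply, Nat.cast_add, Nat.cast_one] at this
  linarith

lemma nonneg [Nonempty ι] (hp : ∀ i, 0 < p i) (h : HasWeight p k m) : 0 ≤ k := by
  obtain ⟨b, hb, hm⟩ := h
  by_contra! hk
  have := hm (Classical.arbitrary ι)
  rw [hm.twist_eq_zero_of_nonpos hp hk.le hb, Pi.zero_apply, mul_zero] at this
  omega

lemma eq_zero (hp : ∀ i, 0 < p i) (h : HasWeight p 0 m) : m = 0 := by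
  obtain ⟨b, hb, hm⟩ := h
  obtain rfl := hm.twist_eq_zero_of_nonpos hp le_rfl hb
  exact funext fun i => by simpa using hm i

end HasWeight

end Weight

section Monomial

variable {ι A : Type*} [Fintype ι] [CommSemiring A] (x : ι → A)

/-- The value at the point `x` of the monomial with exponent vector `m`. -/
def monomialAt (m : ι → ℕ) : A := ∏ i, x i ^ m i

lemma monomialAt_zero : monomialAt x 0 = 1 := by simp [monomialAt]

lemma monomialAt_one : monomialAt x 1 = ∏ i, x i := by simp [monomialAt]

lemma monomialAt_add (m m' : ι → ℕ) :
    monomialAt x (m + m') = monomialAt x m * monomialAt x m' := by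
  simp [monomialAt, pow_add, Finset.prod_mul_distrib]

lemma monomialAt_nsmul (l : ℕ) (m : ι → ℕ) : monomialAt x (l • m) = monomialAt x m ^ l := by
  simp [monomialAt, ← Finset.prod_pow, ← pow_mul, mul_comm]

lemma monomialAt_single [DecidableEq ι] (i : ι) (q : ℕ) :
    monomialAt x (Pi.single i q) = x i ^ q := by
  simp [monomialAt, Pi.single_apply, pow_ite]

/-- The submonoid of the monomials in `x` whose degree is a multiple of `s`. They span the
Veronese subring `S^s` when `x` is the family of coordinates of `S`. -/
def veroneseMonomials (p : ι → ℕ) : Submonoid A where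
  carrier := {a | ∃ k m, HasWeight p k m ∧ monomialAt x m = a}
  one_mem' := ⟨0, 0, hasWeight_zero, monomialAt_zero x⟩
  mul_mem' := by
    rintro _ _ ⟨k, m, hm, rfl⟩ ⟨k', m', hm', rfl⟩
    exact ⟨k + k', m + m', hm.add hm', monomialAt_add x m m'⟩

variable {x}

lemma monomialAt_mem_veroneseMonomials {p : ι → ℕ} {k : ℤ} {m : ι → ℕ} (hm : HasWeight p k m) :
    monomialAt x m ∈ veroneseMonomials x p :=
  ⟨k, m, hm, rfl⟩

lemma prod_mem_veroneseMonomials (p : ι → ℕ) : ∏ i, x i ∈ veroneseMonomials x p :=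
  monomialAt_one x ▸ monomialAt_mem_veroneseMonomials hasWeight_one

lemma toSubmodule_adjoin_veroneseMonomials (R : Type*) [CommSemiring R] [Algebra R A]
    (p : ι → ℕ) :
    Subalgebra.toSubmodule (Algebra.adjoin R (veroneseMonomials x p : Set A)) =
      Submodule.span R (veroneseMonomials x p) := by
  rw [Algebra.adjoin_eq_span, Submonoid.closure_eq]

end Monomial

section Generation

variable {ι R A : Type*} [Fintype ι] [DecidableEq ι] [CommSemiring R] [CommSemiring A]
  [Algebra R A] {x : ι → A} {p : ι → ℕ} {M : Submodule R A} {k : ℤ}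

lemma monomialAt_add_single_mem {i i' j : ι}
    (hx : x i ^ p i ∈ Submodule.span R {x i' ^ p i', x j ^ p j}) {m₀ : ι → ℕ}
    (hi' : monomialAt x (m₀ + Pi.single i' (p i')) ∈ M)
    (hj : monomialAt x (m₀ + Pi.single j (p j)) ∈ M) :
    monomialAt x (m₀ + Pi.single i (p i)) ∈ M := by
  obtain ⟨α, β, hαβ⟩ := Submodule.mem_span_pair.mp hx
  simp only [monomialAt_add, monomialAt_single] at hi' hj ⊢
  rw [← hαβ, mul_add, mul_smul_comm, mul_smul_comm]
  exact M.add_mem (M.smul_mem α hi') (M.smul_mem β hj)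

lemma monomialAt_mem_of_exponent_eq_zero (hp : ∀ i, 0 < p i)
    (hx : ∀ i i' j, i' ≠ j → x i ^ p i ∈ Submodule.span R {x i' ^ p i', x j ^ p j})
    (hk : 0 < k) {j t : ι} (htj : t ≠ j)
    (hpow : ∀ l : ℕ, monomialAt x (avoidingExponent p j t) ^ l ∈ M) {Z : Finset ι}
    (hZ : ∀ m, HasWeight p k m → (∀ i, m i = 0 → i ∈ Z) → monomialAt x m ∈ M)
    {m : ι → ℕ} (hm : HasWeight p k m) (hmj : m j = 0) (hmZ : ∀ i, m i = 0 → i ∈ insert j Z) :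
    monomialAt x m ∈ M := by
  obtain ⟨b, hb, hmb⟩ := hm
  obtain ⟨l, rfl⟩ := hmb.exists_eq_natCast_mul (hp j) hk.le hmj
  set c : ι → ℤ := l • (Pi.single t 1 - Pi.single j 1) with hc
  have hc_sum : ∑ i, c i = 0 := by simp [hc, ← Finset.mul_sum]
  have hc_nonneg : ∀ i, i ≠ j → 0 ≤ c i := fun i hij => by
    simp only [hc, Pi.smul_apply, Pi.sub_apply, Pi.single_eq_of_ne hij, Pi.single_apply]
    split_ifs <;> simp
  have hc_twist : HasTwist p (l * p j) c (l • avoidingExponent p j t) :=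
    (hasTwist_avoidingExponent htj).nsmul l
  refine exchange_induction (c := c) (P := fun b => ∑ i, b i = 0 → ∀ m, HasTwist p (l * p j) b m →
    m j = 0 → (∀ i, m i = 0 → i ∈ insert j Z) → monomialAt x m ∈ M) ?base ?step b
    (hb.trans hc_sum.symm) hb m hmb hmj hmZ
  case base =>
    intro _ m hm _ _
    rw [hm.eq_of_same_twist hc_twist, monomialAt_nsmul]
    exact hpow l
  case step =>
    intro b i i' hi hi' ih hb m hm hmj hmZ
    have hbj : b j = c j :=
      hm.twist_apply_eq hc_twist (hp j) (by simpa [avoidingExponent] using hmj)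
    have hij : i ≠ j := by rintro rfl; omega
    have hi'j : i' ≠ j := by rintro rfl; omega
    obtain ⟨m₀, rfl, hm₀, htwist⟩ := hm.exists_exchange hk ((hc_nonneg i hij).trans_lt hi)
    have hsum : ∀ q, ∑ r, (b - Pi.single i 1 + Pi.single q 1 : ι → ℤ) r = 0 := fun q => by
      simp [Finset.sum_add_distrib, hb]
    have hzero : ∀ q r, (m₀ + Pi.single q (p q) : ι → ℕ) r = 0 → r ∈ insert j Z := fun q r hr =>
      hmZ r (hm₀ r (Nat.eq_zero_of_add_eq_zero_right hr))
    refine monomialAt_add_single_mem (hx i i' j hi'j) (ih (hsum i') _ (htwist i') ?_ (hzero i'))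
      (hZ _ ⟨_, hsum j, htwist j⟩ fun r hr => Finset.mem_of_mem_insert_of_ne (hzero j r hr) ?_)
    · simpa [hij.symm, hi'j.symm] using hmj
    · rintro rfl
      exact (hp r).ne' (by simpa using Nat.eq_zero_of_add_eq_zero_left hr)

lemma monomialAt_mem [Nonempty ι] (hp : ∀ i, 0 < p i)
    (hx : ∀ i i' j, i' ≠ j → x i ^ p i ∈ Submodule.span R {x i' ^ p i', x j ^ p j})
    (hmul : ∀ m, HasWeight p (k - 1) m → (∏ i, x i) * monomialAt x m ∈ M)
    (hpow : ∀ j, ∃ t ≠ j, ∀ l : ℕ, monomialAt x (avoidingExponent p j t) ^ l ∈ M)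
    {m : ι → ℕ} (hm : HasWeight p k m) : monomialAt x m ∈ M := by
  rcases (hm.nonneg hp).eq_or_lt with rfl | hk
  · obtain ⟨t, -, ht⟩ := hpow (Classical.arbitrary ι)
    simpa [hm.eq_zero hp, monomialAt_zero] using ht 0
  suffices h : ∀ (Z : Finset ι) (m : ι → ℕ), HasWeight p k m → (∀ i, m i = 0 → i ∈ Z) →
      monomialAt x m ∈ M from h Finset.univ m hm fun i _ => Finset.mem_univ i
  intro Z
  induction Z using Finset.induction_on with
  | empty =>
    intro m hm hmZ
    obtain ⟨m', rfl⟩ : ∃ m', m = 1 + m' :=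
      exists_add_of_le fun i => Nat.one_le_iff_ne_zero.mpr fun hi => by simpa using hmZ i hi
    rw [monomialAt_add, monomialAt_one]
    exact hmul m' hm.of_one_add
  | insert j Z _ ih =>
    intro m hm hmZ
    by_cases hmj : m j = 0
    · obtain ⟨t, htj, ht⟩ := hpow j
      exact monomialAt_mem_of_exponent_eq_zero hp hx hk htj ht ih hm hmj hmZ
    · exact ih m hm fun i hi =>
        Finset.mem_of_mem_insert_of_ne (hmZ i hi) (by rintro rfl; exact hmj hi)

variable [Nonempty ι] {κ : Type*} {u : κ → A}

lemma adjoin_insert_range_eq_adjoin_veroneseMonomials (hp : ∀ i, 0 < p i)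
    (hx : ∀ i i' j, i' ≠ j → x i ^ p i ∈ Submodule.span R {x i' ^ p i', x j ^ p j})
    (hu : ∀ i, u i ∈ Algebra.adjoin R (veroneseMonomials x p : Set A))
    (hgen : ∀ j, ∃ t ≠ j, ∃ (i : κ) (ε : R), monomialAt x (avoidingExponent p j t) = ε • u i) :
    Algebra.adjoin R (insert (∏ i, x i) (Set.range u)) =
      Algebra.adjoin R (veroneseMonomials x p : Set A) := by
  refine le_antisymm (Algebra.adjoin_le (Set.insert_subset ?_ (Set.range_subset_iff.mpr hu)))
    (Algebra.adjoin_le ?_)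
  · exact Algebra.subset_adjoin (prod_mem_veroneseMonomials p)
  set B := Algebra.adjoin R (insert (∏ i, x i) (Set.range u))
  have hpow : ∀ j, ∃ t ≠ j, ∀ l : ℕ,
      monomialAt x (avoidingExponent p j t) ^ l ∈ Subalgebra.toSubmodule B := fun j => by
    obtain ⟨t, htj, i, ε, hε⟩ := hgen j
    have hui : u i ∈ B := Algebra.subset_adjoin (Set.mem_insert_of_mem _ ⟨i, rfl⟩)
    exact ⟨t, htj, fun l => hε ▸ B.pow_mem (B.smul_mem hui ε) l⟩
  have hmem : ∀ (k : ℕ) (m : ι → ℕ), HasWeight p k m → monomialAt x m ∈ B := by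
    intro k
    induction k with
    | zero => exact fun m hm => hm.eq_zero hp ▸ monomialAt_zero x ▸ B.one_mem
    | succ k ih =>
      intro m hm
      refine monomialAt_mem (M := Subalgebra.toSubmodule B) hp hx (fun m' hm' => ?_) hpow hm
      exact B.mul_mem (Algebra.subset_adjoin (Set.mem_insert _ _)) (ih m' (by simpa using hm'))
  rintro _ ⟨k, m, hm, rfl⟩
  lift k to ℕ using hm.nonneg hp
  exact hmem k m hm

lemma toSubmodule_adjoin_veroneseMonomials_eq_sup (hp : ∀ i, 0 < p i)
    (hx : ∀ i i' j, i' ≠ j → x i ^ p i ∈ Submodule.span R {x i' ^ p i', x j ^ p j})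
    (hu : ∀ i, u i ∈ Algebra.adjoin R (veroneseMonomials x p : Set A))
    (hgen : ∀ j, ∃ t ≠ j, ∃ (i : κ) (ε : R), monomialAt x (avoidingExponent p j t) = ε • u i) :
    Subalgebra.toSubmodule (Algebra.adjoin R (veroneseMonomials x p : Set A)) =
      Submodule.span R
          {w | ∃ g ∈ Algebra.adjoin R (veroneseMonomials x p : Set A), w = (∏ i, x i) * g} ⊔
        Submodule.span R {w | ∃ (i : κ) (l : ℕ), w = u i ^ l} := by
  set V := Algebra.adjoin R (veroneseMonomials x p : Set A) with hV
  apply le_antisymm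
  · rw [hV, toSubmodule_adjoin_veroneseMonomials, Submodule.span_le]
    rintro _ ⟨k, m, hm, rfl⟩
    refine monomialAt_mem hp hx (fun m' hm' => ?_) (fun j => ?_) hm
    · exact Submodule.mem_sup_left (Submodule.subset_span
        ⟨_, Algebra.subset_adjoin (monomialAt_mem_veroneseMonomials hm'), rfl⟩)
    · obtain ⟨t, htj, i, ε, hε⟩ := hgen j
      refine ⟨t, htj, fun l => Submodule.mem_sup_right ?_⟩
      rw [hε, smul_pow]
      exact Submodule.smul_mem _ _ (Submodule.subset_span ⟨i, l, rfl⟩)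
  · refine sup_le (Submodule.span_le.mpr ?_) (Submodule.span_le.mpr ?_)
    · rintro _ ⟨g, hg, rfl⟩
      exact V.mul_mem (Algebra.subset_adjoin (prod_mem_veroneseMonomials p)) hg
    · rintro _ ⟨i, l, rfl⟩
      exact V.pow_mem (hu i) l

theorem veronese_generation_general (hp : ∀ i, 0 < p i)
    (hx : ∀ i i' j, i' ≠ j → x i ^ p i ∈ Submodule.span R {x i' ^ p i', x j ^ p j})
    (hu : ∀ i, u i ∈ Algebra.adjoin R (veroneseMonomials x p : Set A))
    (hgen : ∀ j, ∃ t ≠ j, ∃ (i : κ) (ε : R), monomialAt x (avoidingExponent p j t) = ε • u i) :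
    Subalgebra.toSubmodule (Algebra.adjoin R (insert (∏ i, x i) (Set.range u))) =
      Subalgebra.toSubmodule (Algebra.adjoin R (veroneseMonomials x p : Set A)) ∧
    Subalgebra.toSubmodule (Algebra.adjoin R (veroneseMonomials x p : Set A)) =
      Submodule.span R {w | ∃ g ∈ Subalgebra.toSubmodule
          (Algebra.adjoin R (veroneseMonomials x p : Set A)), w = (∏ i, x i) * g} ⊔
        Submodule.span R {w | ∃ (i : κ) (l : ℕ), w = u i ^ l} :=
  ⟨congrArg _ (adjoin_insert_range_eq_adjoin_veroneseMonomials hp hx hu hgen),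
    toSubmodule_adjoin_veroneseMonomials_eq_sup hp hx hu hgen⟩

end Generation

section Degree

lemma mem_LRel_iff {ι : Type} [DecidableEq ι] [Fintype ι] (p : ι → ℕ) (v : Option ι → ℤ) :
    v ∈ LRel ι p ↔ ∃ b : ι → ℤ, v none = -∑ i, b i ∧ ∀ i, v (some i) = p i * b i := by
  let r : ι → Option ι → ℤ := fun i => (p i : ℤ) • Pi.single (some i) 1 - Pi.single none 1
  have hrange : {v | ∃ i, v = r i} = Set.range r := Set.ext fun v => exists_congr fun i => eq_comm
  rw [LRel, hrange, AddSubgroup.mem_closure_range_iff_of_fintype]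
  refine exists_congr fun b => ?_
  simp [funext_iff, Option.forall, r, Finset.sum_apply, Pi.single_apply, mul_comm]

lemma sum_zsmul_egen_eq_zero_iff {ι : Type} [DecidableEq ι] [Fintype ι] (p : ι → ℕ) (a : ι → ℤ) :
    ∑ i, a i • egen p i = 0 ↔ ∃ b : ι → ℤ, ∑ i, b i = 0 ∧ ∀ i, a i = p i * b i := by
  have hmk : ∑ i, a i • egen p i =
      QuotientAddGroup.mk' (LRel ι p) (∑ i, a i • Pi.single (some i) 1) := by
    simp [egen, map_sum]
  rw [hmk, QuotientAddGroup.mk'_apply, QuotientAddGroup.eq_zero_iff, mem_LRel_iff]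
  simp [Finset.sum_apply, Pi.single_apply]

lemma wtB_eq_zsmul_iff {n : ℕ} (p : Fin n → ℕ) (m : Fin n →₀ ℕ) (k : ℤ) :
    wtB p m = k • ∑ i, egen p i ↔ HasWeight p k m := by
  have hsub : wtB p m - k • ∑ i, egen p i = ∑ i, ((m i : ℤ) - k) • egen p i := by
    simp only [wtB, sub_smul, natCast_zsmul, Finset.sum_sub_distrib, Finset.sum_zsmul]
  rw [← sub_eq_zero, hsub, sum_zsmul_egen_eq_zero_iff]
  simp only [HasWeight, HasTwist, sub_eq_iff_eq_add']

lemma polyCompB_eq_restrictSupport {n : ℕ} {p : Fin n → ℕ} (y : LGroup (Fin n) p) :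
    polyCompB p y = restrictSupport ℂ {m | wtB p m = y} := by
  ext f
  simp [polyCompB, mem_restrictSupport_iff, Set.subset_def]

end Degree

section Coordinates

variable {n : ℕ} [NeZero n] {p : Fin n → ℕ} {lam : Fin n → ℂ}

/-- The coordinate functions `xᵢ ∈ S`. -/
def xElem (n : ℕ) [NeZero n] (p : Fin n → ℕ) (lam : Fin n → ℂ) (i : Fin n) : BAlg n p lam :=
  Ideal.Quotient.mk (BIdl n p lam) (X i)

lemma vElem_eq_prod : vElem n p lam = ∏ i, xElem n p lam i := map_prod _ _ _

lemma mk_monomial_one (m : Fin n →₀ ℕ) :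
    Ideal.Quotient.mk (BIdl n p lam) (monomial m 1) = monomialAt (xElem n p lam) m := by
  simp [monomial_eq, Finsupp.prod_fintype, monomialAt, xElem]

lemma SCompB_eq_span (y : LGroup (Fin n) p) :
    SCompB n p lam y =
      Submodule.span ℂ ((fun m : Fin n →₀ ℕ => monomialAt (xElem n p lam) m) ''
        {m | wtB p m = y}) := by
  rw [SCompB, polyCompB_eq_restrictSupport, restrictSupport_eq_span, Submodule.map_span,
    Set.image_image]
  exact congrArg _ (Set.image_congr fun m _ => mk_monomial_one m)

lemma SVerB_eq_adjoin_veroneseMonomials :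
    SVerB n p lam (∑ i, egen p i) = Subalgebra.toSubmodule
      (Algebra.adjoin ℂ (veroneseMonomials (xElem n p lam) p : Set (BAlg n p lam))) := by
  rw [toSubmodule_adjoin_veroneseMonomials, SVerB]
  simp only [SCompB_eq_span, ← Submodule.span_iUnion, wtB_eq_zsmul_iff]
  congr 1
  ext a
  simp only [Set.mem_iUnion, Set.mem_image, Set.mem_ofPred_eq]
  exact exists_congr fun k => Finsupp.equivFunOnFinite.exists_congr_left.trans <| by simp

end Coordinates

section Indices

variable {n : ℕ} [NeZero n]

lemma val_one_of_two_le (hn : 2 ≤ n) : ((1 : Fin n) : ℕ) = 1 := by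
  rw [Fin.coe_ofNat_eq_mod, Nat.mod_eq_of_lt hn]

lemma zero_ne_one_of_two_le (hn : 2 ≤ n) : (0 : Fin n) ≠ 1 := fun h => by
  have := congrArg Fin.val h
  rw [val_one_of_two_le hn, Fin.val_zero] at this
  exact zero_ne_one this

lemma two_le_val_iff (hn : 2 ≤ n) {i : Fin n} : 2 ≤ (i : ℕ) ↔ i ≠ 0 ∧ i ≠ 1 := by
  rw [Ne, Ne, Fin.ext_iff, Fin.ext_iff, val_one_of_two_le hn, Fin.val_zero]
  omega

lemma prod_eq_zero_mul_one_mul_prod {R : Type*} [CommMonoid R] (hn : 2 ≤ n) (f : Fin n → R) :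
    ∏ i, f i = f 0 * f 1 * ∏ j with 2 ≤ (j : Fin n).val, f j := by
  have hfilter : (Finset.univ.filter fun j : Fin n => ¬ 2 ≤ (j : ℕ)) = {0, 1} := by
    ext j
    simp only [two_le_val_iff hn, Finset.mem_filter_univ, Finset.mem_insert, Finset.mem_singleton]
    tauto
  rw [← Finset.prod_filter_not_mul_prod_filter Finset.univ (fun j : Fin n => 2 ≤ (j : ℕ)),
    hfilter, Finset.prod_pair (zero_ne_one_of_two_le hn)]

end Indices

section Pencil

lemma mem_span_pair_of_det_ne_zero {K V : Type*} [Field K] [AddCommGroup V] [Module K V]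
    {y z : V} {a c a' c' a'' c'' : K} (h : a' * c'' - a'' * c' ≠ 0) :
    a • y + c • z ∈ Submodule.span K {a' • y + c' • z, a'' • y + c'' • z} := by
  refine Submodule.mem_span_pair.mpr ⟨(a * c'' - a'' * c) / (a' * c'' - a'' * c'),
    (a' * c - a * c') / (a' * c'' - a'' * c'), ?_⟩
  generalize hD : a' * c'' - a'' * c' = D at h ⊢
  match_scalars <;> field_simp
  · linear_combination a * hD
  · linear_combination c * hD

variable {n : ℕ} [NeZero n] {p : Fin n → ℕ} {lam : Fin n → ℂ}

/-- The coefficient of `x₁ ^ p₁` in the expression of `xᵢ ^ pᵢ` through `x₁ ^ p₁` and `x₂ ^ p₂`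
(indices as in the paper). -/
def pencilFst (i : Fin n) : ℂ := if i = 0 then 1 else if i = 1 then 0 else -1

/-- The coefficient of `x₂ ^ p₂` in the expression of `xᵢ ^ pᵢ` through `x₁ ^ p₁` and `x₂ ^ p₂`
(indices as in the paper). -/
def pencilSnd (lam : Fin n → ℂ) (i : Fin n) : ℂ :=
  if i = 0 then 0 else if i = 1 then 1 else lam i

lemma pencil_det_ne_zero (hn : 2 ≤ n) (hlam0 : ∀ i : Fin n, 2 ≤ (i : ℕ) → lam i ≠ 0)
    (hlamd : ∀ i j : Fin n, 2 ≤ (i : ℕ) → 2 ≤ (j : ℕ) → i ≠ j → lam i ≠ lam j)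
    {i j : Fin n} (hij : i ≠ j) :
    pencilFst i * pencilSnd lam j - pencilFst j * pencilSnd lam i ≠ 0 := by
  simp only [two_le_val_iff hn] at hlam0 hlamd
  rw [pencilFst, pencilFst, pencilSnd, pencilSnd]
  split_ifs <;> grind

lemma xElem_pow_eq (hn : 2 ≤ n) (i : Fin n) :
    xElem n p lam i ^ p i = pencilFst i • xElem n p lam 0 ^ p 0 +
      pencilSnd lam i • xElem n p lam 1 ^ p 1 := by
  rcases eq_or_ne i 0 with rfl | hi0
  · simp [pencilFst, pencilSnd]
  rcases eq_or_ne i 1 with rfl | hi1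
  · simp [pencilFst, pencilSnd, hi0]
  have hrel : X i ^ p i + X 0 ^ p 0 - C (lam i) * X 1 ^ p 1 ∈ BIdl n p lam :=
    Ideal.subset_span ⟨i, (two_le_val_iff hn).mpr ⟨hi0, hi1⟩, rfl⟩
  have hzero : xElem n p lam i ^ p i + xElem n p lam 0 ^ p 0 -
      lam i • xElem n p lam 1 ^ p 1 = 0 := by
    rw [C_mul'] at hrel
    exact Ideal.Quotient.eq_zero_iff_mem.mpr hrel
  simp only [pencilFst, pencilSnd, hi0, hi1, if_false, neg_smul, one_smul]
  linear_combination hzero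

lemma xElem_pow_mem_span_pair (hn : 2 ≤ n) (hlam0 : ∀ i : Fin n, 2 ≤ (i : ℕ) → lam i ≠ 0)
    (hlamd : ∀ i j : Fin n, 2 ≤ (i : ℕ) → 2 ≤ (j : ℕ) → i ≠ j → lam i ≠ lam j)
    (i i' j : Fin n) (hij : i' ≠ j) :
    xElem n p lam i ^ p i ∈
      Submodule.span ℂ {xElem n p lam i' ^ p i', xElem n p lam j ^ p j} := by
  rw [xElem_pow_eq hn i, xElem_pow_eq hn i', xElem_pow_eq hn j]
  exact mem_span_pair_of_det_ne_zero (pencil_det_ne_zero hn hlam0 hlamd hij)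

end Pencil

section Generators

variable {n : ℕ} [NeZero n] {p : Fin n → ℕ} {lam : Fin n → ℂ}

lemma uElem_zero (hn : 2 ≤ n) :
    uElem n p lam 0 = monomialAt (xElem n p lam) (avoidingExponent p 1 0) := by
  have hprod : ∏ j with 2 ≤ (j : Fin n).val, xElem n p lam j ^ avoidingExponent p 1 0 j =
      ∏ j with 2 ≤ (j : Fin n).val, xElem n p lam j ^ p 1 := by
    refine Finset.prod_congr rfl fun j hj => ?_
    obtain ⟨hj0, hj1⟩ := (two_le_val_iff hn).mp (Finset.mem_filter_univ j |>.mp hj)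
    simp only [avoidingExponent, hj0, hj1, if_false]
  rw [monomialAt, prod_eq_zero_mul_one_mul_prod hn, hprod, uElem, uPoly]
  simp [avoidingExponent, zero_ne_one_of_two_le hn, xElem]

lemma uElem_one (hn : 2 ≤ n) :
    uElem n p lam 1 = monomialAt (xElem n p lam) (avoidingExponent p 0 1) := by
  have h1 : ((1 : Fin n) : ℕ) = 1 := val_one_of_two_le hn
  have hprod : ∏ j with 2 ≤ (j : Fin n).val, xElem n p lam j ^ avoidingExponent p 0 1 j =
      ∏ j with 2 ≤ (j : Fin n).val, xElem n p lam j ^ p 0 := by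
    refine Finset.prod_congr rfl fun j hj => ?_
    obtain ⟨hj0, hj1⟩ := (two_le_val_iff hn).mp (Finset.mem_filter_univ j |>.mp hj)
    simp only [avoidingExponent, hj0, hj1, if_false]
  rw [monomialAt, prod_eq_zero_mul_one_mul_prod hn, hprod, uElem, uPoly, if_neg (by omega),
    if_pos h1]
  simp [avoidingExponent, (zero_ne_one_of_two_le hn).symm, xElem, add_comm]

lemma uElem_of_two_le (hn : 2 ≤ n) {i : Fin n} (hi : 2 ≤ (i : ℕ)) :
    uElem n p lam i = -monomialAt (xElem n p lam) (avoidingExponent p i 1) := by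
  obtain ⟨hi0, hi1⟩ := (two_le_val_iff hn).mp hi
  have hprod : ∏ j with 2 ≤ (j : Fin n).val, xElem n p lam j ^ avoidingExponent p i 1 j =
      ∏ j with 2 ≤ (j : Fin n).val ∧ j ≠ i, xElem n p lam j ^ p i := by
    rw [← Finset.filter_filter, Finset.prod_filter (fun j => j ≠ i)]
    refine Finset.prod_congr rfl fun j hj => ?_
    obtain ⟨-, hj1⟩ := (two_le_val_iff hn).mp (Finset.mem_filter_univ j |>.mp hj)
    by_cases hji : j = i <;> simp [avoidingExponent, hji, hj1]
  rw [monomialAt, prod_eq_zero_mul_one_mul_prod hn, hprod, uElem, uPoly, if_neg (by omega),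
    if_neg (by omega)]
  simp [avoidingExponent, zero_ne_one_of_two_le hn, hi0.symm, hi1.symm, xElem]

lemma uElem_mem_adjoin_veroneseMonomials (hn : 2 ≤ n) (i : Fin n) :
    uElem n p lam i ∈
      Algebra.adjoin ℂ (veroneseMonomials (xElem n p lam) p : Set (BAlg n p lam)) := by
  have hmem : ∀ {j t : Fin n}, t ≠ j → monomialAt (xElem n p lam) (avoidingExponent p j t) ∈
      Algebra.adjoin ℂ (veroneseMonomials (xElem n p lam) p : Set (BAlg n p lam)) := fun htj =>
    Algebra.subset_adjoin (monomialAt_mem_veroneseMonomials (hasWeight_avoidingExponent htj))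
  rcases eq_or_ne i 0 with rfl | hi0
  · exact uElem_zero hn ▸ hmem (zero_ne_one_of_two_le hn)
  rcases eq_or_ne i 1 with rfl | hi1
  · exact uElem_one hn ▸ hmem hi0
  · exact uElem_of_two_le hn ((two_le_val_iff hn).mpr ⟨hi0, hi1⟩) ▸ neg_mem (hmem hi1.symm)

lemma exists_monomialAt_avoidingExponent_eq_smul_uElem (hn : 2 ≤ n) (j : Fin n) :
    ∃ t ≠ j, ∃ (i : Fin n) (ε : ℂ),
      monomialAt (xElem n p lam) (avoidingExponent p j t) = ε • uElem n p lam i := by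
  rcases eq_or_ne j 0 with rfl | hj0
  · exact ⟨1, (zero_ne_one_of_two_le hn).symm, 1, 1, by rw [uElem_one hn, one_smul]⟩
  rcases eq_or_ne j 1 with rfl | hj1
  · exact ⟨0, zero_ne_one_of_two_le hn, 0, 1, by rw [uElem_zero hn, one_smul]⟩
  · exact ⟨1, hj1.symm, j, -1, by
      rw [uElem_of_two_le hn ((two_le_val_iff hn).mpr ⟨hj0, hj1⟩), neg_one_smul, neg_neg]⟩

end Generators

/-- (1) The Veronese subring `S^s` (for `s = e₁ + ⋯ + eₙ`) is the
`ℂ`-subalgebra of `S` generated by `𝗏, 𝗎₁, …, 𝗎ₙ`.  (2) The quotient `S^s/𝗏S^s` is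
spanned by the images of the powers `𝗎ᵢ^ℓ`. -/
theorem veronese_generation (n : ℕ) (hn : 3 ≤ n) [NeZero n] (p : Fin n → ℕ)
    (hp : ∀ i, 2 ≤ p i) (lam : Fin n → ℂ)
    (hlam0 : ∀ i : Fin n, 2 ≤ (i : ℕ) → lam i ≠ 0)
    (hlamd : ∀ i j : Fin n, 2 ≤ (i : ℕ) → 2 ≤ (j : ℕ) → i ≠ j → lam i ≠ lam j) :
    Subalgebra.toSubmodule
        (Algebra.adjoin ℂ (insert (vElem n p lam) (Set.range (uElem n p lam)))) =
      SVerB n p lam (∑ i, egen p i) ∧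
    SVerB n p lam (∑ i, egen p i) =
      Submodule.span ℂ
          { w | ∃ g ∈ SVerB n p lam (∑ i, egen p i), w = vElem n p lam * g } ⊔
        Submodule.span ℂ { w | ∃ (i : Fin n) (l : ℕ), w = uElem n p lam i ^ l } := by
  have hn₂ : 2 ≤ n := by omega
  rw [SVerB_eq_adjoin_veroneseMonomials, vElem_eq_prod]
  exact veronese_generation_general (fun i => two_pos.trans_le (hp i))
    (xElem_pow_mem_span_pair hn₂ hlam0 hlamd) (uElem_mem_adjoin_veroneseMonomials hn₂)
    (exists_monomialAt_avoidingExponent_eq_smul_uElem hn₂)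
end
end
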